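/- arXiv:1003.3852 — 3 statements merged into one kernel-verified Lean document; each statement's English description precedes it below -/
import Mathlib

section
/- (Talagrand's transport inequality for the Gaussian measure) Let γ be the standard Gaussian measure N(0,1) on ℝ. Then for every Borel probability measure ν on ℝ, W₂²(ν, γ) ≤ 2 H(ν|γ), where W₂ is the Wasserstein distance of order 2 for the distance d(x,y) = |x − y|. -/
open MeasureTheory ENNReal

/-- The optimal transport cost `𝒯_c(ν, μ)` associated with the cost function `c`:
the infimum of `∫ c dπ` over all couplings `π` of `ν` and `μ`. -/
noncomputable def optCost {X : Type*} [MeasurableSpace X] (c : X → X → ℝ)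
    (ν μ : Measure X) : ℝ≥0∞ :=
  ⨅ (π : Measure (X × X)) (_ : π.map Prod.fst = ν ∧ π.map Prod.snd = μ),
    ∫⁻ p, ENNReal.ofReal (c p.1 p.2) ∂π

open Classical in
/-- The relative entropy `H(ν|μ)`: it equals `∫ h(dν/dμ) dμ` with
`h(t) = t log t - t + 1 ≥ 0` if `ν ≪ μ`, and `+∞` otherwise.  For probability
measures `ν ≪ μ` this coincides with `∫ log (dν/dμ) dν`. -/
noncomputable def relEntropy {X : Type*} [MeasurableSpace X] (ν μ : Measure X) : ℝ≥0∞ :=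
  if ν ≪ μ then
    ∫⁻ x, ENNReal.ofReal ((ν.rnDeriv μ x).toReal * Real.log (ν.rnDeriv μ x).toReal
      - (ν.rnDeriv μ x).toReal + 1) ∂μ
  else ∞

/-!
Let `T = F_γ⁻¹ ∘ F_ν` be the monotone map pushing `ν` to the Gaussian `γ = N(m, v)` with density
`φ`, and let `A = {0 < F_ν < 1}`, a set of full `ν`-measure. The duality
`∫ log g dν + 1 ≤ H(ν|γ) + ∫ g dγ` for `g = 1_A φ(T) / φ` bounds
`∫ ((x - m)² - (T - m)²) / (2v) dν` by `H(ν|γ) - 1 + ∫_A φ(T) dx`. Since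
`∫_{y ≤ a} (y - m) dγ = -v φ(a)`, integration by parts (Fubini) turns the last integral into
`v⁻¹ ∫ x (T - m) dν`, and expanding the square gives `∫ (x - T)² dν ≤ 2 v H(ν|γ)`. No regularity of
`T` is needed, because no change of variables takes place.
-/

open ProbabilityTheory InformationTheory Set Filter Topology
open scoped NNReal

section CostAndEntropy

variable {X : Type*} [MeasurableSpace X] {ν μ : Measure X}

lemma optCost_le_lintegral_of_hasLaw {T : X → X} (hT : HasLaw T μ ν) (c : X → X → ℝ) :
    optCost c ν μ ≤ ∫⁻ x, ENNReal.ofReal (c x (T x)) ∂ν := by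
  have hgraph : AEMeasurable (fun x => (x, T x)) ν := aemeasurable_id.prodMk hT.aemeasurable
  have hfst : (ν.map fun x => (x, T x)).map Prod.fst = ν := by
    rw [AEMeasurable.map_map_of_aemeasurable measurable_fst.aemeasurable hgraph]
    exact Measure.map_id
  have hsnd : (ν.map fun x => (x, T x)).map Prod.snd = μ := by
    rw [AEMeasurable.map_map_of_aemeasurable measurable_snd.aemeasurable hgraph]
    exact hT.map_eq
  exact (iInf₂_le _ ⟨hfst, hsnd⟩).trans (lintegral_map_le _ _)

variable [IsFiniteMeasure ν] [IsFiniteMeasure μ]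

lemma relEntropy_eq_klDiv : relEntropy ν μ = klDiv ν μ := by
  have hklFun (t : ℝ) : t * Real.log t - t + 1 = klFun t := by rw [klFun_apply]; ring
  simp only [relEntropy, klDiv_eq_lintegral_klFun, hklFun]

lemma mul_log_le_klFun_add_sub_one {a b : ℝ} (ha : 0 ≤ a) (hb : 0 < b) :
    a * Real.log b ≤ klFun a + b - 1 := by
  rcases ha.eq_or_lt with rfl | ha
  · simp [klFun_zero, hb.le]
  have hrescale : b * klFun (a / b) = klFun a + b - 1 - a * Real.log b := by
    rw [klFun_apply, klFun_apply, Real.log_div ha.ne' hb.ne']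
    field_simp
    ring
  have := mul_nonneg hb.le (klFun_nonneg (div_pos ha hb).le)
  linarith

lemma integrable_klFun_rnDeriv_of_klDiv_ne_top (h : klDiv ν μ ≠ ∞) :
    Integrable (fun x => klFun (ν.rnDeriv μ x).toReal) μ :=
  (integrable_klFun_rnDeriv_iff (klDiv_ne_top_iff.1 h).1).2 (klDiv_ne_top_iff.1 h).2

/- The upper bound in the Donsker–Varadhan variational formula, in terms of `g = exp t`; this form
allows `g` to vanish on a `ν`-null set. -/
lemma integral_log_add_measureReal_univ_le (h : klDiv ν μ ≠ ∞) {g : X → ℝ} (hg : 0 ≤ᵐ[μ] g)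
    (hpos : ∀ᵐ x ∂ν, 0 < g x) (hint : Integrable g μ)
    (hlog : Integrable (fun x => Real.log (g x)) ν) :
    ∫ x, Real.log (g x) ∂ν + μ.real univ ≤ (klDiv ν μ).toReal + ∫ x, g x ∂μ := by
  obtain ⟨hac, -⟩ := klDiv_ne_top_iff.1 h
  have hkl := integrable_klFun_rnDeriv_of_klDiv_ne_top h
  have hpointwise : (fun x => (ν.rnDeriv μ x).toReal * Real.log (g x)) ≤ᵐ[μ]
      fun x => klFun (ν.rnDeriv μ x).toReal + g x - 1 := by
    filter_upwards [hg, Measure.ae_rnDeriv_ne_zero_imp_of_ae μ hpos] with x hx hxpos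
    by_cases hf : ν.rnDeriv μ x = 0
    · simpa [hf, klFun_zero] using hx
    · exact mul_log_le_klFun_add_sub_one toReal_nonneg (hxpos hf)
  have hintegral : ∫ x, Real.log (g x) ∂ν ≤ ∫ x, (klFun (ν.rnDeriv μ x).toReal + g x - 1) ∂μ := by
    rw [← integral_rnDeriv_smul hac]
    exact integral_mono_ae ((integrable_rnDeriv_smul_iff hac).2 hlog)
      ((hkl.add hint).sub (integrable_const 1)) hpointwise
  rw [integral_sub (f := fun x => klFun _ + g x) (hkl.add hint) (integrable_const 1),
    integral_add hkl hint, integral_const, smul_eq_mul, mul_one,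
    ← toReal_klDiv_eq_integral_klFun hac] at hintegral
  linarith

lemma integrable_of_integrable_exp_of_klDiv_ne_top (h : klDiv ν μ ≠ ∞) {f : X → ℝ}
    (hf : AEStronglyMeasurable f μ) (hexp : Integrable (fun x => Real.exp |f x|) μ) :
    Integrable f ν := by
  obtain ⟨hac, -⟩ := klDiv_ne_top_iff.1 h
  rw [← integrable_rnDeriv_smul_iff hac]
  refine (((integrable_klFun_rnDeriv_of_klDiv_ne_top h).add hexp).sub (integrable_const 1)).mono'
    ((Measure.measurable_rnDeriv ν μ).ennreal_toReal.aestronglyMeasurable.smul hf)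
    (ae_of_all _ fun x => ?_)
  simpa [abs_mul] using mul_log_le_klFun_add_sub_one toReal_nonneg (Real.exp_pos |f x|)

end CostAndEntropy

lemma memLp_id_two_of_klDiv_isGaussian_ne_top {E : Type*} [NormedAddCommGroup E] [NormedSpace ℝ E]
    [CompleteSpace E] [SecondCountableTopology E] [MeasurableSpace E] [BorelSpace E]
    {ν μ : Measure E} [IsFiniteMeasure ν] [IsGaussian μ] (h : klDiv ν μ ≠ ∞) : MemLp id 2 ν := by
  obtain ⟨C, hC, hexp⟩ := IsGaussian.exists_integrable_exp_sq μ
  have habs (x : E) : |C * ‖x‖ ^ 2| = C * ‖x‖ ^ 2 := abs_of_nonneg (by positivity)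
  have hint : Integrable (fun x => C * ‖x‖ ^ 2) ν :=
    integrable_of_integrable_exp_of_klDiv_ne_top h (by fun_prop) (by simpa only [habs] using hexp)
  rw [memLp_two_iff_integrable_sq_norm aestronglyMeasurable_id]
  exact (integrable_const_mul_iff hC.ne'.isUnit _).1 hint

section IntegrationByParts

/-- The layer-cake kernel `1_{z ≤ x} - 1_{0 ≤ x}`: integrated in `x` it gives `-z`, and, as a
function of `z`, it differs from `1_{z ≤ x}` by a constant. Subtracting `1_{0 ≤ x}` makes it
integrable in `x`. -/
noncomputable def layerCakeKernel (z x : ℝ) : ℝ :=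
  (Ici z).indicator 1 x - (Ici 0).indicator 1 x

lemma layerCakeKernel_eq_indicator_Ico (z x : ℝ) :
    layerCakeKernel z x = (Ico z 0).indicator 1 x - (Ico 0 z).indicator 1 x := by
  simp only [layerCakeKernel, indicator, mem_Ici, mem_Ico, Pi.one_apply]
  grind

lemma abs_layerCakeKernel (z x : ℝ) :
    |layerCakeKernel z x| = (Ico z 0).indicator 1 x + (Ico 0 z).indicator 1 x := by
  simp only [layerCakeKernel, indicator, mem_Ici, mem_Ico, Pi.one_apply]
  grind

lemma measurable_uncurry_layerCakeKernel : Measurable (Function.uncurry layerCakeKernel) :=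
  (measurable_one.indicator (measurableSet_le measurable_fst measurable_snd)).sub
    (measurable_one.indicator (measurableSet_le measurable_const measurable_snd))

lemma integrable_indicator_Ico_one (a b : ℝ) :
    Integrable ((Ico a b).indicator (1 : ℝ → ℝ)) :=
  (integrable_indicator_iff measurableSet_Ico).2 (integrableOn_const (by simp))

lemma integrable_layerCakeKernel (z : ℝ) : Integrable (layerCakeKernel z) := by
  rw [funext (layerCakeKernel_eq_indicator_Ico z)]
  exact (integrable_indicator_Ico_one z 0).sub (integrable_indicator_Ico_one 0 z)

lemma integral_layerCakeKernel (z : ℝ) : ∫ x, layerCakeKernel z x = -z := by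
  simp only [layerCakeKernel_eq_indicator_Ico]
  rw [integral_sub (integrable_indicator_Ico_one z 0) (integrable_indicator_Ico_one 0 z),
    integral_indicator_one measurableSet_Ico, integral_indicator_one measurableSet_Ico,
    Real.volume_real_Ico, Real.volume_real_Ico]
  grind

lemma integral_abs_layerCakeKernel (z : ℝ) : ∫ x, |layerCakeKernel z x| = |z| := by
  simp only [abs_layerCakeKernel]
  rw [integral_add (integrable_indicator_Ico_one z 0) (integrable_indicator_Ico_one 0 z),
    integral_indicator_one measurableSet_Ico, integral_indicator_one measurableSet_Ico,
    Real.volume_real_Ico, Real.volume_real_Ico]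
  grind

variable {ν : Measure ℝ} {g : ℝ → ℝ}

lemma integral_mul_layerCakeKernel (hg : Integrable g ν) (hzero : ∫ z, g z ∂ν = 0) (x : ℝ) :
    ∫ z, g z * layerCakeKernel z x ∂ν = ∫ z in Iic x, g z ∂ν := by
  have hsplit (z : ℝ) : g z * layerCakeKernel z x =
      (Iic x).indicator g z - g z * (Ici 0).indicator 1 x := by
    simp only [layerCakeKernel, indicator, mem_Ici, mem_Iic, Pi.one_apply]
    grind
  simp only [hsplit]
  rw [integral_sub (hg.indicator measurableSet_Iic) (hg.mul_const _), integral_mul_const, hzero,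
    zero_mul, sub_zero, integral_indicator measurableSet_Iic]

lemma integrable_mul_layerCakeKernel (hg : AEStronglyMeasurable g ν)
    (hmul : Integrable (fun z => z * g z) ν) :
    Integrable (fun p : ℝ × ℝ => g p.1 * layerCakeKernel p.1 p.2) (ν.prod volume) := by
  have hmeas : AEStronglyMeasurable (fun p : ℝ × ℝ => g p.1 * layerCakeKernel p.1 p.2)
      (ν.prod volume) :=
    hg.comp_fst.mul measurable_uncurry_layerCakeKernel.aestronglyMeasurable
  refine (integrable_prod_iff hmeas).2
    ⟨ae_of_all _ fun z => (integrable_layerCakeKernel z).const_mul (g z), ?_⟩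
  refine hmul.norm.congr (ae_of_all _ fun z => ?_)
  simp only [Real.norm_eq_abs, abs_mul, integral_const_mul, integral_abs_layerCakeKernel, mul_comm]

variable [SFinite ν]

lemma integrable_setIntegral_Iic (hg : Integrable g ν) (hzero : ∫ z, g z ∂ν = 0)
    (hmul : Integrable (fun z => z * g z) ν) : Integrable fun x => ∫ z in Iic x, g z ∂ν := by
  simpa only [integral_mul_layerCakeKernel hg hzero] using
    (integrable_mul_layerCakeKernel hg.aestronglyMeasurable hmul).integral_prod_right

lemma integral_setIntegral_Iic (hg : Integrable g ν) (hzero : ∫ z, g z ∂ν = 0)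
    (hmul : Integrable (fun z => z * g z) ν) :
    ∫ x, ∫ z in Iic x, g z ∂ν = -∫ z, z * g z ∂ν := by
  calc ∫ x, ∫ z in Iic x, g z ∂ν = ∫ x, ∫ z, g z * layerCakeKernel z x ∂ν := by
        simp only [integral_mul_layerCakeKernel hg hzero]
    _ = ∫ z, (∫ x, g z * layerCakeKernel z x) ∂ν :=
        (integral_integral_swap
          (integrable_mul_layerCakeKernel hg.aestronglyMeasurable hmul)).symm
    _ = -∫ z, z * g z ∂ν := by
        simp only [integral_const_mul, integral_layerCakeKernel, mul_neg, integral_neg, mul_comm]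

end IntegrationByParts

section MonotoneRearrangement

/-- The quantile function of `μ`, the generalized inverse of its cdf. It is meaningful on `(0, 1)`
only: outside that interval the infimum may be the junk value `0`. -/
noncomputable def quantile (μ : Measure ℝ) (u : ℝ) : ℝ :=
  sInf {y | u ≤ cdf μ y}

/-- The monotone rearrangement `F_μ⁻¹ ∘ F_ν` of `ν` onto `μ`: the monotone map transporting an
atomless `ν` to `μ`. -/
noncomputable def monotoneRearrangement (ν μ : Measure ℝ) (x : ℝ) : ℝ :=
  quantile μ (cdf ν x)

variable {ν μ : Measure ℝ}

lemma quantile_le_iff {u : ℝ} (hu : u ∈ Ioo 0 1) {y : ℝ} : quantile μ u ≤ y ↔ u ≤ cdf μ y := by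
  obtain ⟨b, hb⟩ := ((tendsto_cdf_atBot μ).eventually (gt_mem_nhds hu.1)).exists
  obtain ⟨t, ht⟩ := ((tendsto_cdf_atTop μ).eventually (lt_mem_nhds hu.2)).exists
  have hbdd : BddBelow {y | u ≤ cdf μ y} :=
    ⟨b, fun y hy => ((monotone_cdf μ).reflect_lt (hb.trans_le hy)).le⟩
  have hattained : u ≤ cdf μ (quantile μ u) :=
    ContinuousWithinAt.closure_le (csInf_mem_closure ⟨t, ht.le⟩ hbdd) continuousWithinAt_const
      (((cdf μ).right_continuous _).mono fun y hy => csInf_le hbdd hy) fun _ hy => hy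
  exact ⟨fun h => hattained.trans (monotone_cdf μ h), fun h => csInf_le hbdd h⟩

lemma monotoneOn_quantile : MonotoneOn (quantile μ) (Ioo 0 1) := fun _ hu _ hw huw =>
  (quantile_le_iff hu).2 (huw.trans ((quantile_le_iff hw).1 le_rfl))

lemma hasLaw_quantile [IsProbabilityMeasure μ] :
    HasLaw (quantile μ) μ (volume.restrict (Ioo 0 1)) := by
  have hmeas : AEMeasurable (quantile μ) (volume.restrict (Ioo 0 1)) :=
    aemeasurable_restrict_of_monotoneOn measurableSet_Ioo monotoneOn_quantile
  refine ⟨hmeas, Measure.ext_of_Iic _ _ fun y => ?_⟩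
  have hsublevel : quantile μ ⁻¹' Iic y =ᵐ[volume.restrict (Ioo 0 1)] Iic (cdf μ y) := by
    filter_upwards [ae_restrict_mem measurableSet_Ioo] with u hu
    exact propext (quantile_le_iff hu)
  rw [Measure.map_apply_of_aemeasurable hmeas measurableSet_Iic, measure_congr hsublevel,
    Measure.restrict_congr_set Ioo_ae_eq_Ioc, Measure.restrict_apply measurableSet_Iic,
    Iic_inter_Ioc_of_le (cdf_le_one μ y)]
  simp [ofReal_cdf]

lemma continuous_cdf [IsProbabilityMeasure μ] [NullSingletonClass μ] : Continuous (cdf μ) := by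
  refine continuous_iff_continuousAt.2 fun x => ?_
  have hatom := (cdf μ).measure_singleton x
  rw [measure_cdf, measure_singleton, eq_comm, ENNReal.ofReal_eq_zero, sub_nonpos] at hatom
  rw [(monotone_cdf μ).continuousAt_iff_leftLim_eq_rightLim, StieltjesFunction.rightLim_eq]
  exact ((monotone_cdf μ).leftLim_le le_rfl).antisymm hatom

lemma cdf_quantile [IsProbabilityMeasure μ] [NullSingletonClass μ] {u : ℝ} (hu : u ∈ Ioo 0 1) :
    cdf μ (quantile μ u) = u := by
  obtain ⟨x, rfl⟩ : ∃ x, cdf μ x = u := mem_range_of_exists_le_of_exists_ge continuous_cdf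
    ((tendsto_cdf_atBot μ).eventually (ge_mem_nhds hu.1)).exists
    ((tendsto_cdf_atTop μ).eventually (le_mem_nhds hu.2)).exists
  exact (monotone_cdf μ ((quantile_le_iff hu).2 le_rfl)).antisymm ((quantile_le_iff hu).1 le_rfl)

lemma measurableSet_cdf_preimage_Ioo : MeasurableSet (cdf μ ⁻¹' Ioo 0 1) :=
  (monotone_cdf μ).measurable measurableSet_Ioo

lemma hasLaw_cdf [IsProbabilityMeasure μ] [NullSingletonClass μ] :
    HasLaw (cdf μ) (volume.restrict (Ioo 0 1)) μ := by
  have hinv : cdf μ ∘ quantile μ =ᵐ[volume.restrict (Ioo 0 1)] id := by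
    filter_upwards [ae_restrict_mem measurableSet_Ioo] with u hu using cdf_quantile hu
  exact HasLaw.comp_of_hasLaw_comp (monotone_cdf μ).measurable.aemeasurable hasLaw_quantile
    HasLaw.id (HasLaw.id.congr hinv)

lemma ae_cdf_mem_Ioo [IsProbabilityMeasure μ] [NullSingletonClass μ] :
    ∀ᵐ x ∂μ, cdf μ x ∈ Ioo 0 1 :=
  (hasLaw_cdf.ae_iff measurableSet_Ioo.mem).2 (ae_restrict_mem measurableSet_Ioo)

variable [IsProbabilityMeasure ν] [IsProbabilityMeasure μ] [NullSingletonClass ν]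

lemma hasLaw_monotoneRearrangement : HasLaw (monotoneRearrangement ν μ) μ ν :=
  hasLaw_quantile.comp hasLaw_cdf

variable [NullSingletonClass μ]

lemma Iic_ae_eq_preimage_monotoneRearrangement {x : ℝ} (hx : cdf ν x ∈ Ioo 0 1) :
    Iic x =ᵐ[ν] monotoneRearrangement ν μ ⁻¹' Iic (monotoneRearrangement ν μ x) := by
  have hT : HasLaw (monotoneRearrangement ν μ) μ ν := hasLaw_monotoneRearrangement
  have hsubset : Iic x ≤ᵐ[ν] monotoneRearrangement ν μ ⁻¹' Iic (monotoneRearrangement ν μ x) := by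
    filter_upwards [ae_cdf_mem_Ioo (μ := ν)] with z hz hzx
    exact monotoneOn_quantile hz hx (monotone_cdf ν hzx)
  refine ae_eq_of_ae_subset_of_measure_ge hsubset (le_of_eq ?_)
    measurableSet_Iic.nullMeasurableSet (measure_ne_top _ _)
  rw [← Measure.map_apply_of_aemeasurable hT.aemeasurable measurableSet_Iic, hT.map_eq,
    ← ofReal_cdf, ← ofReal_cdf, monotoneRearrangement, cdf_quantile hx]

variable {g : ℝ → ℝ}

lemma setIntegral_Iic_comp_monotoneRearrangement (hg : AEStronglyMeasurable g μ) {x : ℝ}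
    (hx : cdf ν x ∈ Ioo 0 1) :
    ∫ z in Iic x, g (monotoneRearrangement ν μ z) ∂ν =
      ∫ y in Iic (monotoneRearrangement ν μ x), g y ∂μ := by
  have hT : HasLaw (monotoneRearrangement ν μ) μ ν := hasLaw_monotoneRearrangement
  rw [setIntegral_congr_set (Iic_ae_eq_preimage_monotoneRearrangement (μ := μ) hx),
    ← setIntegral_map measurableSet_Iic (hT.map_eq.symm ▸ hg) hT.aemeasurable, hT.map_eq]

lemma setIntegral_Iic_comp_monotoneRearrangement_eq_indicator (hg : AEStronglyMeasurable g μ)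
    (hzero : ∫ y, g y ∂μ = 0) (x : ℝ) :
    ∫ z in Iic x, g (monotoneRearrangement ν μ z) ∂ν =
      (cdf ν ⁻¹' Ioo 0 1).indicator
        (fun x => ∫ y in Iic (monotoneRearrangement ν μ x), g y ∂μ) x := by
  rcases (cdf_nonneg ν x).eq_or_lt with h0 | h0
  · have hnull : ν (Iic x) = 0 := by rw [← ofReal_cdf, ← h0, ENNReal.ofReal_zero]
    rw [setIntegral_measure_zero _ hnull, indicator_of_notMem (by simp [← h0])]
  rcases (cdf_le_one ν x).eq_or_lt with h1 | h1
  · have hfull : ∀ᵐ z ∂ν, z ∈ Iic x := by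
      change Iic x ∈ ae ν
      rw [mem_ae_iff_prob_eq_one measurableSet_Iic, ← ofReal_cdf, h1, ENNReal.ofReal_one]
    rw [indicator_of_notMem (by simp [h1]), Measure.restrict_eq_self_of_ae_mem hfull, ← hzero]
    exact hasLaw_monotoneRearrangement.integral_comp hg
  · rw [indicator_of_mem (s := cdf ν ⁻¹' Ioo 0 1) ⟨h0, h1⟩,
      setIntegral_Iic_comp_monotoneRearrangement hg ⟨h0, h1⟩]

end MonotoneRearrangement

section Gaussian

variable {m : ℝ} {v : ℝ≥0}

lemma hasDerivAt_gaussianPDFReal (m : ℝ) (v : ℝ≥0) (x : ℝ) :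
    HasDerivAt (gaussianPDFReal m v) (-((x - m) / v) * gaussianPDFReal m v x) x := by
  have hexponent : HasDerivAt (fun x => -(x - m) ^ 2 / (2 * v)) (-((x - m) / v)) x :=
    (((hasDerivAt_id x).sub_const m).pow 2).neg.div_const (2 * v : ℝ) |>.congr_deriv (by
      simp only [id_eq]
      push_cast
      ring)
  exact (hexponent.exp.const_mul (√(2 * Real.pi * v))⁻¹).congr_deriv (by
    rw [gaussianPDFReal]
    ring)

lemma integrable_gaussianReal_iff (hv : v ≠ 0) {f : ℝ → ℝ} :
    Integrable f (gaussianReal m v) ↔ Integrable fun x => gaussianPDFReal m v x * f x := by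
  rw [gaussianReal_of_var_ne_zero m hv, integrable_withDensity_iff_integrable_smul'
    (measurable_gaussianPDF m v) (ae_of_all _ fun _ => gaussianPDF_lt_top)]
  simp only [toReal_gaussianPDF, smul_eq_mul]

lemma integrable_div_gaussianPDFReal (hv : v ≠ 0) {f : ℝ → ℝ} :
    Integrable (fun x => f x / gaussianPDFReal m v x) (gaussianReal m v) ↔ Integrable f := by
  simp only [integrable_gaussianReal_iff hv, mul_div_cancel₀ _ (gaussianPDFReal_pos m v _ hv).ne']

lemma integral_div_gaussianPDFReal (hv : v ≠ 0) (f : ℝ → ℝ) :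
    ∫ x, f x / gaussianPDFReal m v x ∂gaussianReal m v = ∫ x, f x := by
  simp only [integral_gaussianReal_eq_integral_smul hv, smul_eq_mul,
    mul_div_cancel₀ _ (gaussianPDFReal_pos m v _ hv).ne']

lemma log_gaussianPDFReal_div (hv : v ≠ 0) (x y : ℝ) :
    Real.log (gaussianPDFReal m v y / gaussianPDFReal m v x) =
      ((x - m) ^ 2 - (y - m) ^ 2) / (2 * v) := by
  have hconst : (√(2 * Real.pi * v))⁻¹ ≠ 0 := by positivity
  rw [gaussianPDFReal, gaussianPDFReal, mul_div_mul_left _ _ hconst, ← Real.exp_sub, Real.log_exp]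
  ring

lemma integral_sub_gaussianReal (m : ℝ) (v : ℝ≥0) : ∫ y, (y - m) ∂gaussianReal m v = 0 := by
  have hint : Integrable (fun y => y) (gaussianReal m v) :=
    (memLp_id_gaussianReal 1).integrable le_rfl
  rw [integral_sub hint (integrable_const m), integral_id_gaussianReal]
  simp

lemma integral_sub_sq_gaussianReal (m : ℝ) (v : ℝ≥0) :
    ∫ y, (y - m) ^ 2 ∂gaussianReal m v = v := by
  rw [← variance_fun_id_gaussianReal (μ := m), variance_eq_integral aemeasurable_id',
    integral_id_gaussianReal]

lemma setIntegral_Iic_sub_gaussianReal (hv : v ≠ 0) (a : ℝ) :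
    ∫ y in Iic a, (y - m) ∂gaussianReal m v = -(v * gaussianPDFReal m v a) := by
  have hderiv (x : ℝ) : HasDerivAt (fun x => -(v * gaussianPDFReal m v x))
      (gaussianPDFReal m v x * (x - m)) x := by
    refine ((hasDerivAt_gaussianPDFReal m v x).const_mul (v : ℝ)).neg.congr_deriv ?_
    field_simp
  have hint : Integrable fun x => gaussianPDFReal m v x * (x - m) :=
    (integrable_gaussianReal_iff hv).1
      (((memLp_id_gaussianReal 1).integrable le_rfl).sub (integrable_const m))
  have hlim : Tendsto (fun x => -(v * gaussianPDFReal m v x)) atBot (𝓝 0) :=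
    tendsto_zero_of_hasDerivAt_of_integrableOn_Iic (a := a) (fun x _ => hderiv x)
      hint.integrableOn ((integrable_gaussianPDFReal m v).const_mul _).neg.integrableOn
  rw [← integral_indicator measurableSet_Iic, integral_gaussianReal_eq_integral_smul hv]
  simp only [smul_eq_mul, ← indicator_mul_right]
  rw [integral_indicator measurableSet_Iic,
    integral_Iic_of_hasDerivAt_of_tendsto' (fun x _ => hderiv x) hint.integrableOn hlim, sub_zero]

lemma integral_sq_sub_sq_div_add_one_le (hv : v ≠ 0) {ν : Measure ℝ} [IsFiniteMeasure ν]
    (h : klDiv ν (gaussianReal m v) ≠ ∞) {T : ℝ → ℝ} {A : Set ℝ} (hA : MeasurableSet A)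
    (hfull : ∀ᵐ x ∂ν, x ∈ A) (hint : IntegrableOn (fun x => gaussianPDFReal m v (T x)) A)
    (hT : MemLp T 2 ν) :
    ∫ x, ((x - m) ^ 2 - (T x - m) ^ 2) / (2 * v) ∂ν + 1 ≤
      (klDiv ν (gaussianReal m v)).toReal + ∫ x in A, gaussianPDFReal m v (T x) := by
  let f : ℝ → ℝ := A.indicator fun x => gaussianPDFReal m v (T x)
  have hnonneg (x : ℝ) : 0 ≤ f x / gaussianPDFReal m v x :=
    div_nonneg (indicator_nonneg (fun _ _ => gaussianPDFReal_nonneg m v _) x)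
      (gaussianPDFReal_nonneg m v x)
  have hpos : ∀ᵐ x ∂ν, 0 < f x / gaussianPDFReal m v x := by
    filter_upwards [hfull] with x hx
    simpa only [f, indicator_of_mem hx] using
      div_pos (gaussianPDFReal_pos m v (T x) hv) (gaussianPDFReal_pos m v x hv)
  have hlog : (fun x => ((x - m) ^ 2 - (T x - m) ^ 2) / (2 * v)) =ᵐ[ν]
      fun x => Real.log (f x / gaussianPDFReal m v x) := by
    filter_upwards [hfull] with x hx
    simp only [f, indicator_of_mem hx, log_gaussianPDFReal_div hv]
  have hquad : Integrable (fun x => ((x - m) ^ 2 - (T x - m) ^ 2) / (2 * v)) ν :=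
    ((((memLp_id_two_of_klDiv_isGaussian_ne_top h).sub (memLp_const m)).integrable_sq.sub
      (hT.sub (memLp_const m)).integrable_sq)).div_const _
  have hvariational := integral_log_add_measureReal_univ_le h (ae_of_all _ hnonneg) hpos
    ((integrable_div_gaussianPDFReal hv).2 ((integrable_indicator_iff hA).2 hint))
    (hquad.congr hlog)
  rwa [← integral_congr_ae hlog, probReal_univ, integral_div_gaussianPDFReal hv,
    integral_indicator hA] at hvariational

end Gaussian

section GaussianRearrangement

variable {ν : Measure ℝ} [IsProbabilityMeasure ν] [NullSingletonClass ν] {m : ℝ} {v : ℝ≥0}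

local notation "T" => monotoneRearrangement ν (gaussianReal m v)

lemma memLp_monotoneRearrangement_gaussianReal (p : ℝ≥0) : MemLp T p ν :=
  have hT : HasLaw T (gaussianReal m v) ν := hasLaw_monotoneRearrangement
  MemLp.comp_of_map (g := id) (hT.map_eq.symm ▸ memLp_id_gaussianReal p) hT.aemeasurable

lemma memLp_monotoneRearrangement_gaussianReal_sub (p : ℝ≥0) : MemLp (fun x => T x - m) p ν :=
  (memLp_monotoneRearrangement_gaussianReal p).sub (memLp_const m)

lemma integral_monotoneRearrangement_gaussianReal_sub : ∫ x, (T x - m) ∂ν = 0 :=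
  (hasLaw_monotoneRearrangement.integral_comp (f := fun y => y - m) (by fun_prop)).trans
    (integral_sub_gaussianReal m v)

lemma integral_monotoneRearrangement_gaussianReal_sub_sq : ∫ x, (T x - m) ^ 2 ∂ν = v :=
  (hasLaw_monotoneRearrangement.integral_comp (f := fun y => (y - m) ^ 2) (by fun_prop)).trans
    (integral_sub_sq_gaussianReal m v)

lemma setIntegral_Iic_monotoneRearrangement_gaussianReal_sub (hv : v ≠ 0) (x : ℝ) :
    ∫ z in Iic x, (T z - m) ∂ν =
      (cdf ν ⁻¹' Ioo 0 1).indicator (fun x => -(v * gaussianPDFReal m v (T x))) x := by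
  have := nullSingletonClass_gaussianReal (μ := m) hv
  simpa only [setIntegral_Iic_sub_gaussianReal hv] using
    setIntegral_Iic_comp_monotoneRearrangement_eq_indicator (ν := ν)
      (by fun_prop) (integral_sub_gaussianReal m v) x

lemma integrableOn_gaussianPDFReal_monotoneRearrangement (hv : v ≠ 0)
    (hmul : Integrable (fun x => x * (T x - m)) ν) :
    IntegrableOn (fun x => gaussianPDFReal m v (T x)) (cdf ν ⁻¹' Ioo 0 1) := by
  have hint := integrable_setIntegral_Iic
    ((memLp_monotoneRearrangement_gaussianReal_sub 1).integrable le_rfl)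
    integral_monotoneRearrangement_gaussianReal_sub hmul
  rw [funext (setIntegral_Iic_monotoneRearrangement_gaussianReal_sub hv),
    integrable_indicator_iff measurableSet_cdf_preimage_Ioo] at hint
  exact (integrable_const_mul_iff (NNReal.coe_ne_zero.2 hv).isUnit _).1 (integrable_neg_iff.1 hint)

lemma mul_setIntegral_gaussianPDFReal_monotoneRearrangement (hv : v ≠ 0)
    (hmul : Integrable (fun x => x * (T x - m)) ν) :
    v * ∫ x in cdf ν ⁻¹' Ioo 0 1, gaussianPDFReal m v (T x) = ∫ x, x * (T x - m) ∂ν := by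
  have hparts := integral_setIntegral_Iic
    ((memLp_monotoneRearrangement_gaussianReal_sub 1).integrable le_rfl)
    integral_monotoneRearrangement_gaussianReal_sub hmul
  rwa [funext (setIntegral_Iic_monotoneRearrangement_gaussianReal_sub hv),
    integral_indicator measurableSet_cdf_preimage_Ioo, integral_neg, integral_const_mul,
    neg_inj] at hparts

lemma integral_sq_sub_monotoneRearrangement_gaussianReal_le (hv : v ≠ 0)
    (h : klDiv ν (gaussianReal m v) ≠ ∞) :
    ∫ x, (x - T x) ^ 2 ∂ν ≤ 2 * v * (klDiv ν (gaussianReal m v)).toReal := by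
  have hid : MemLp id 2 ν := memLp_id_two_of_klDiv_isGaussian_ne_top h
  have hT : MemLp T 2 ν := memLp_monotoneRearrangement_gaussianReal 2
  have hS : MemLp (fun x => T x - m) 2 ν := memLp_monotoneRearrangement_gaussianReal_sub 2
  have hS_int : Integrable (fun x => T x - m) ν := hS.integrable one_le_two
  have hS_sq : Integrable (fun x => (T x - m) ^ 2) ν := hS.integrable_sq
  have hmul : Integrable (fun x => x * (T x - m)) ν := hid.integrable_mul hS
  have hquad : Integrable (fun x => ((x - m) ^ 2 - (T x - m) ^ 2) / (2 * v)) ν :=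
    ((hid.sub (memLp_const m)).integrable_sq.sub hS_sq).div_const _
  have hexpand (x : ℝ) : (x - T x) ^ 2 = 2 * v * (((x - m) ^ 2 - (T x - m) ^ 2) / (2 * v)) +
      2 * (T x - m) ^ 2 - 2 * (x * (T x - m)) + 2 * m * (T x - m) := by
    field_simp
    ring
  have hentropy := integral_sq_sub_sq_div_add_one_le hv h measurableSet_cdf_preimage_Ioo
    ae_cdf_mem_Ioo (integrableOn_gaussianPDFReal_monotoneRearrangement hv hmul) hT
  calc ∫ x, (x - T x) ^ 2 ∂ν
      = 2 * v * ∫ x, ((x - m) ^ 2 - (T x - m) ^ 2) / (2 * v) ∂ν + 2 * ∫ x, (T x - m) ^ 2 ∂ν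
          - 2 * ∫ x, x * (T x - m) ∂ν + 2 * m * ∫ x, (T x - m) ∂ν := by
        simp only [hexpand]
        rw [integral_add, integral_sub, integral_add]
        · simp only [integral_const_mul]
        all_goals fun_prop
    _ = 2 * v * (∫ x, ((x - m) ^ 2 - (T x - m) ^ 2) / (2 * v) ∂ν + 1
          - ∫ x in cdf ν ⁻¹' Ioo 0 1, gaussianPDFReal m v (T x)) := by
        rw [integral_monotoneRearrangement_gaussianReal_sub,
          integral_monotoneRearrangement_gaussianReal_sub_sq,
          ← mul_setIntegral_gaussianPDFReal_monotoneRearrangement hv hmul]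
        ring
    _ ≤ 2 * v * (klDiv ν (gaussianReal m v)).toReal := by
        gcongr
        linarith

end GaussianRearrangement

theorem talagrand_T2_gaussian_general (m : ℝ) {v : ℝ≥0} (hv : v ≠ 0) (ν : Measure ℝ)
    [IsProbabilityMeasure ν] :
    optCost (fun x y => |x - y| ^ 2) ν (gaussianReal m v) ≤
      2 * v * relEntropy ν (gaussianReal m v) := by
  rw [relEntropy_eq_klDiv]
  by_cases h : klDiv ν (gaussianReal m v) = ∞
  · simp [h, hv]
  have := nullSingletonClass_gaussianReal (μ := m) hv
  have : NullSingletonClass ν := ⟨fun x => (klDiv_ne_top_iff.1 h).1 (measure_singleton x)⟩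
  have hint : Integrable (fun x => (x - monotoneRearrangement ν (gaussianReal m v) x) ^ 2) ν :=
    ((memLp_id_two_of_klDiv_isGaussian_ne_top h).sub
      (memLp_monotoneRearrangement_gaussianReal 2)).integrable_sq
  calc optCost (fun x y => |x - y| ^ 2) ν (gaussianReal m v)
      ≤ ∫⁻ x, ENNReal.ofReal (|x - monotoneRearrangement ν (gaussianReal m v) x| ^ 2) ∂ν :=
        optCost_le_lintegral_of_hasLaw hasLaw_monotoneRearrangement _
    _ = ENNReal.ofReal (∫ x, (x - monotoneRearrangement ν (gaussianReal m v) x) ^ 2 ∂ν) := by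
        simp only [sq_abs,
          ofReal_integral_eq_lintegral_ofReal hint (ae_of_all _ fun _ => sq_nonneg _)]
    _ ≤ ENNReal.ofReal (2 * v * (klDiv ν (gaussianReal m v)).toReal) :=
        ENNReal.ofReal_le_ofReal (integral_sq_sub_monotoneRearrangement_gaussianReal_le hv h)
    _ = 2 * v * klDiv ν (gaussianReal m v) := by
        rw [ENNReal.ofReal_mul (by positivity), ENNReal.ofReal_toReal h]
        simp [ENNReal.ofReal_mul]

/-- Talagrand's transport inequality for the standard Gaussian measure on `ℝ`:
`W₂²(ν, γ) ≤ 2 H(ν|γ)` for every Borel probability measure `ν` on `ℝ`, where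
`W₂² = 𝒯_{d²}` is the squared Wasserstein distance of order 2 for `d(x,y) = |x − y|`. -/
theorem talagrand_T2_gaussian (ν : Measure ℝ) [IsProbabilityMeasure ν] :
    optCost (fun x y => |x - y| ^ 2) ν (ProbabilityTheory.gaussianReal 0 1) ≤
      2 * relEntropy ν (ProbabilityTheory.gaussianReal 0 1) := by
  simpa using talagrand_T2_gaussian_general 0 one_ne_zero ν
end

section
/- (Kantorovich dual equality) Let c : 𝒳 × 𝒳 → [0,∞) be a lower semicontinuous cost function on a Polish space 𝒳. Then for all ν, μ ∈ P(𝒳), 𝒯_c(ν,μ) = sup { ∫_𝒳 u dν + ∫_𝒳 v dμ : u, v bounded continuous real functions on 𝒳 with u(x) + v(y) ≤ c(x,y) for all x,y ∈ 𝒳 }. -/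
open MeasureTheory ENNReal

/-!
On compact spaces, let `D` be the dual value and charge `∫ u dμ + ∫ v dν + t D` for covering a
payoff `ψ` by `u(x) + v(y) + t c(x, y)`, where `t ≥ 0`. Covering `0` never has negative cost, by
the definition of `D`. So M. Riesz's extension theorem yields a linear functional on `C(X × Y)`
whose value at `ψ` is at most the cost of any cover of `ψ`. The covers with `t = 0` show that it is
integration against a coupling of `μ` and `ν`, and the covers with `(u, v, t) = (0, 0, 1)` show that
this coupling has cost at most `D`, since a lower semicontinuous `c` is the supremum of an
increasing sequence of continuous functions.

In general, embed both spaces into the Hilbert cube and extend the cost to a lower semicontinuous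
function there. Couplings of the image measures are concentrated on the images of the spaces, hence
can be pulled back.
-/

open Filter Topology BoundedContinuousFunction
open scoped NNReal

section LowerSemicontinuous

theorem exists_lowerSemicontinuous_comp_eq {X Z γ : Type*} [TopologicalSpace X]
    [TopologicalSpace Z] [CompleteLinearOrder γ] [DenselyOrdered γ] {f : X → Z}
    (hf : IsInducing f) {c : X → γ} (hc : LowerSemicontinuous c) :
    ∃ c' : Z → γ, LowerSemicontinuous c' ∧ c' ∘ f = c := by
  refine ⟨fun z ↦ liminf c (comap f (𝓝 z)), fun z a ha ↦ ?_, funext fun x ↦ ?_⟩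
  · obtain ⟨b, hab, hb⟩ := exists_between ha
    obtain ⟨U, hU, hbU⟩ := mem_comap.1 (eventually_lt_of_lt_liminf hb)
    filter_upwards [eventually_mem_nhds_iff.2 hU] with w hUw
    exact hab.trans_le <| le_liminf_of_le (by isBoundedDefault) <|
      mem_of_superset (preimage_mem_comap hUw) fun x hx ↦ (hbU hx).le
  · rw [Function.comp_apply, ← hf.nhds_eq_comap]
    exact le_antisymm
      (liminf_le_of_frequently_le' <| frequently_iff.2 fun hU ↦ ⟨x, mem_of_mem_nhds hU, le_rfl⟩)
      (hc.le_liminf x)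

variable {Z : Type*} [TopologicalSpace Z] [CompletelyRegularSpace Z] {c : Z → ℝ≥0∞}

theorem exists_continuousMap_le_of_lt (hc : LowerSemicontinuous c) {z : Z} {a : ℝ≥0∞}
    (ha : a < c z) : ∃ f : C(Z, ℝ≥0), (∀ w, (f w : ℝ≥0∞) ≤ c w) ∧ a < f z := by
  obtain ⟨b, hab, hbc⟩ := ENNReal.lt_iff_exists_nnreal_btwn.1 ha
  obtain ⟨g, hg, hgz, hg_one⟩ := CompletelyRegularSpace.completely_regular z {w | c w ≤ b}
    (hc.isClosed_preimage _) hbc.not_ge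
  refine ⟨⟨fun w ↦ b * unitInterval.toNNReal (unitInterval.symm (g w)), by fun_prop⟩,
    fun w ↦ ?_, by simpa [hgz] using hab⟩
  rcases le_total (c w) b with hw | hw
  · simp [hg_one hw]
  · refine le_trans ?_ hw
    exact ENNReal.coe_le_coe.2 <|
      mul_le_of_le_one_right' (a := b) (b := unitInterval.toNNReal _) (unitInterval.symm (g w)).2.2

theorem exists_monotone_continuousMap_iSup_eq [HereditarilyLindelofSpace Z]
    (hc : LowerSemicontinuous c) :
    ∃ φ : ℕ → C(Z, ℝ≥0), Monotone φ ∧ ∀ z, ⨆ n, (φ n z : ℝ≥0∞) = c z := by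
  let ofNNReal : SupHom C(Z, ℝ≥0) (Z → ℝ≥0∞) :=
    { toFun := fun f z ↦ f z
      map_sup' := fun f g ↦ funext fun z ↦ by simp }
  let S : Set C(Z, ℝ≥0) := {f | ofNNReal f ≤ c}
  have isLUB_S : IsLUB (ofNNReal '' S) c := by
    refine ⟨Set.forall_mem_image.2 fun f hf ↦ hf, fun d hd z ↦ le_of_forall_lt fun a ha ↦ ?_⟩
    obtain ⟨f, hfc, haf⟩ := exists_continuousMap_le_of_lt hc ha
    exact haf.trans_le (hd (Set.mem_image_of_mem ofNNReal hfc) z)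
  obtain ⟨T, hTS, hT_count, hT⟩ := exists_countable_lowerSemicontinuous_isLUB
    (Set.forall_mem_image.2 fun f _ ↦
      (ENNReal.continuous_coe.comp f.continuous).lowerSemicontinuous) isLUB_S
  have hT_zero : IsLUB (insert (ofNNReal 0) T) c := by
    simpa only [sup_eq_right.2 (show ofNNReal 0 ≤ c from fun z ↦ by simp [ofNNReal])]
      using hT.insert (ofNNReal 0)
  obtain ⟨s, hs⟩ := (hT_count.insert (ofNNReal 0)).exists_eq_range (Set.insert_nonempty _ _)
  have hs_mem (n : ℕ) : ∃ f, ofNNReal f = s n := by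
    rcases hs ▸ Set.mem_range_self n with h | h
    · exact ⟨0, h.symm⟩
    · exact (hTS h).imp fun f hf ↦ hf.2
  choose f hf using hs_mem
  refine ⟨partialSups f, (partialSups f).monotone, fun z ↦ ?_⟩
  have iSup_eq : ⨆ n, ofNNReal (partialSups f n) = c := calc
    ⨆ n, ofNNReal (partialSups f n) = ⨆ n, partialSups (ofNNReal ∘ f) n :=
      iSup_congr fun n ↦ (map_partialSups ofNNReal f n).symm
    _ = ⨆ n, s n := (iSup_partialSups_eq _).trans (iSup_congr hf)
    _ = c := IsLUB.iSup_eq (hs ▸ hT_zero)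
  rw [← iSup_eq, iSup_apply]
  rfl

end LowerSemicontinuous

section Coupling

variable {X Y : Type*} [MeasurableSpace X] [MeasurableSpace Y]

/-- `π` is a coupling of `μ` and `ν`: a measure on the product with these marginals. -/
def IsCoupling (π : Measure (X × Y)) (μ : Measure X) (ν : Measure Y) : Prop :=
  π.fst = μ ∧ π.snd = ν

/-- The optimal transport cost between measures on two possibly different spaces, for a cost
function which may take the value `∞`; it is `∞` when there is no coupling. -/
noncomputable def transportCost (c : X × Y → ℝ≥0∞) (μ : Measure X) (ν : Measure Y) : ℝ≥0∞ :=
  ⨅ (π : Measure (X × Y)) (_ : IsCoupling π μ ν), ∫⁻ p, c p ∂π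

theorem exists_isCoupling_map_eq {X' Y' : Type*} [MeasurableSpace X'] [MeasurableSpace Y']
    {f : X → X'} {g : Y → Y'} (hf : MeasurableEmbedding f) (hg : MeasurableEmbedding g)
    {μ : Measure X} {ν : Measure Y} {π : Measure (X' × Y')}
    (hπ : IsCoupling π (μ.map f) (ν.map g)) :
    ∃ π', IsCoupling π' μ ν ∧ π'.map (Prod.map f g) = π := by
  obtain ⟨hfst, hsnd⟩ := hπ
  have hfg : MeasurableEmbedding (Prod.map f g) := hf.prodMap hg
  have ae_fst : ∀ᵐ z ∂π, z.1 ∈ Set.range f := by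
    refine ae_of_ae_map (p := (· ∈ Set.range f)) measurable_fst.aemeasurable ?_
    rw [← Measure.fst, hfst, hf.ae_map_iff]
    exact ae_of_all _ Set.mem_range_self
  have ae_snd : ∀ᵐ z ∂π, z.2 ∈ Set.range g := by
    refine ae_of_ae_map (p := (· ∈ Set.range g)) measurable_snd.aemeasurable ?_
    rw [← Measure.snd, hsnd, hg.ae_map_iff]
    exact ae_of_all _ Set.mem_range_self
  have map_comap : (π.comap (Prod.map f g)).map (Prod.map f g) = π := by
    rw [hfg.map_comap, Set.range_prodMap]
    exact Measure.restrict_eq_self_of_ae_mem (ae_fst.and ae_snd)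
  refine ⟨π.comap (Prod.map f g), ⟨?_, ?_⟩, map_comap⟩
  · rw [← hf.comap_map (Measure.fst _), ← hf.comap_map μ, ← hfst, ← map_comap, Measure.fst,
      Measure.fst, Measure.map_map hf.measurable measurable_fst,
      Measure.map_map measurable_fst hfg.measurable, hfg.comap_map]
    rfl
  · rw [← hg.comap_map (Measure.snd _), ← hg.comap_map ν, ← hsnd, ← map_comap, Measure.snd,
      Measure.snd, Measure.map_map hg.measurable measurable_snd,
      Measure.map_map measurable_snd hfg.measurable, hfg.comap_map]
    rfl

theorem transportCost_comp_le_map {X' Y' : Type*} [MeasurableSpace X'] [MeasurableSpace Y']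
    {f : X → X'} {g : Y → Y'} (hf : MeasurableEmbedding f) (hg : MeasurableEmbedding g)
    {c : X' × Y' → ℝ≥0∞} {μ : Measure X} {ν : Measure Y} :
    transportCost (c ∘ Prod.map f g) μ ν ≤ transportCost c (μ.map f) (ν.map g) := by
  refine le_iInf₂ fun π hπ ↦ ?_
  obtain ⟨π', hπ', rfl⟩ := exists_isCoupling_map_eq hf hg hπ
  exact (iInf₂_le π' hπ').trans_eq ((hf.prodMap hg).lintegral_map c).symm

end Coupling

section WeakDuality

theorem ofReal_integral_le_lintegral_ofReal {α : Type*} [MeasurableSpace α] {μ : Measure α}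
    {f : α → ℝ} (hf : Integrable f μ) :
    ENNReal.ofReal (∫ x, f x ∂μ) ≤ ∫⁻ x, ENNReal.ofReal (f x) ∂μ := by
  rw [integral_eq_lintegral_pos_part_sub_lintegral_neg_part hf]
  exact (ENNReal.ofReal_le_ofReal (sub_le_self _ ENNReal.toReal_nonneg)).trans
    ENNReal.ofReal_toReal_le

variable {X Y : Type*} [TopologicalSpace X] [MeasurableSpace X]
  [TopologicalSpace Y] [MeasurableSpace Y]

/-- The value of the Kantorovich dual problem. The constraint `u(x) + v(y) ≤ c(x, y)` is written
with `ENNReal.ofReal` because `c` may be infinite. -/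
noncomputable def kantorovichDual (c : X × Y → ℝ≥0∞) (μ : Measure X) (ν : Measure Y) : ℝ≥0∞ :=
  ⨆ (u : X →ᵇ ℝ) (v : Y →ᵇ ℝ) (_ : ∀ x y, ENNReal.ofReal (u x + v y) ≤ c (x, y)),
    ENNReal.ofReal (∫ x, u x ∂μ + ∫ y, v y ∂ν)

variable {c : X × Y → ℝ≥0∞} {μ : Measure X} {ν : Measure Y}

theorem le_kantorovichDual {u : X →ᵇ ℝ} {v : Y →ᵇ ℝ}
    (huv : ∀ x y, ENNReal.ofReal (u x + v y) ≤ c (x, y)) :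
    ENNReal.ofReal (∫ x, u x ∂μ + ∫ y, v y ∂ν) ≤ kantorovichDual c μ ν :=
  le_iSup₂_of_le u v (le_iSup_of_le huv le_rfl)

theorem kantorovichDual_le_transportCost [OpensMeasurableSpace X] [OpensMeasurableSpace Y]
    [IsFiniteMeasure μ] [IsFiniteMeasure ν] : kantorovichDual c μ ν ≤ transportCost c μ ν := by
  refine iSup₂_le fun u v ↦ iSup_le fun huv ↦ le_iInf₂ fun π hπ ↦ ?_
  obtain ⟨rfl, rfl⟩ := hπ
  have hu : Integrable (fun p ↦ u p.1) π := (u.integrable π.fst).comp_measurable measurable_fst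
  have hv : Integrable (fun p ↦ v p.2) π := (v.integrable π.snd).comp_measurable measurable_snd
  calc ENNReal.ofReal (∫ x, u x ∂π.fst + ∫ y, v y ∂π.snd)
      = ENNReal.ofReal (∫ p, (u p.1 + v p.2) ∂π) := by
        rw [integral_add hu hv, Measure.fst, Measure.snd,
          integral_map measurable_fst.aemeasurable u.continuous.aestronglyMeasurable,
          integral_map measurable_snd.aemeasurable v.continuous.aestronglyMeasurable]
    _ ≤ ∫⁻ p, ENNReal.ofReal (u p.1 + v p.2) ∂π :=
        ofReal_integral_le_lintegral_ofReal (hu.add hv)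
    _ ≤ ∫⁻ p, c p ∂π := lintegral_mono fun p ↦ huv p.1 p.2

theorem kantorovichDual_map_le {X' Y' : Type*} [TopologicalSpace X'] [MeasurableSpace X']
    [BorelSpace X'] [TopologicalSpace Y'] [MeasurableSpace Y'] [BorelSpace Y']
    [OpensMeasurableSpace X] [OpensMeasurableSpace Y] (c : X' × Y' → ℝ≥0∞)
    (f : C(X, X')) (g : C(Y, Y')) :
    kantorovichDual c (μ.map f) (ν.map g) ≤ kantorovichDual (c ∘ Prod.map f g) μ ν := by
  refine iSup₂_le fun u v ↦ iSup_le fun huv ↦ ?_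
  rw [integral_map f.continuous.aemeasurable u.continuous.aestronglyMeasurable,
    integral_map g.continuous.aemeasurable v.continuous.aestronglyMeasurable]
  exact le_kantorovichDual (u := u.compContinuous f) (v := v.compContinuous g)
    fun x y ↦ huv (f x) (g y)

end WeakDuality

section StrongDuality

variable {X Y : Type*} [TopologicalSpace X] [TopologicalSpace Y]

/-- The cone of all `((u, v, t), ψ)` such that the payoff `ψ` is covered by `u`, `v` and `t` units
of the cost: `ψ(x, y) ≤ u(x) + v(y) + t c(x, y)`, where `t ≥ 0`. -/
def coverCone (c : X × Y → ℝ≥0∞) :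
    PointedCone ℝ ((C(X, ℝ) × C(Y, ℝ) × ℝ) × C(X × Y, ℝ)) where
  carrier := {p | 0 ≤ p.1.2.2 ∧
    ∀ x y, ENNReal.ofReal (p.2 (x, y) - p.1.1 x - p.1.2.1 y) ≤ ENNReal.ofReal p.1.2.2 * c (x, y)}
  add_mem' := by
    rintro ⟨⟨u, v, t⟩, ψ⟩ ⟨⟨u', v', t'⟩, ψ'⟩ ⟨ht, h⟩ ⟨ht', h'⟩
    refine ⟨add_nonneg ht ht', fun x y ↦ ?_⟩
    simp only [Prod.mk_add_mk, ContinuousMap.add_apply] at h h' ht ht' ⊢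
    rw [ENNReal.ofReal_add ht ht', add_mul]
    refine le_trans (le_of_eq_of_le ?_ ENNReal.ofReal_add_le) (add_le_add (h x y) (h' x y))
    congr 1
    ring
  zero_mem' := by simp
  smul_mem' := by
    rintro ⟨r, hr⟩ ⟨⟨u, v, t⟩, ψ⟩ ⟨ht, h⟩
    refine ⟨mul_nonneg hr ht, fun x y ↦ ?_⟩
    have hxy := mul_le_mul_right (h x y) (ENNReal.ofReal r)
    rw [← ENNReal.ofReal_mul hr, ← mul_assoc, ← ENNReal.ofReal_mul hr, mul_sub, mul_sub] at hxy
    exact hxy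

theorem cover_cost_nonneg {c : X × Y → ℝ≥0∞} {I : C(X, ℝ) →ₗ[ℝ] ℝ} {J : C(Y, ℝ) →ₗ[ℝ] ℝ} {D : ℝ}
    (hD : ∀ u v, (∀ x y, ENNReal.ofReal (u x + v y) ≤ c (x, y)) → I u + J v ≤ D)
    {u : C(X, ℝ)} {v : C(Y, ℝ)} {t : ℝ} (ht : 0 ≤ t)
    (huv : ∀ x y, ENNReal.ofReal (-(u x + v y)) ≤ ENNReal.ofReal t * c (x, y)) :
    0 ≤ I u + J v + t * D := by
  -- Scaling a cover by `1 / s` makes it admissible for the dual problem, but `t` may be `0`.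
  have nonneg_of_lt (s : ℝ) (hs : t < s) : 0 ≤ I u + J v + s * D := by
    have hs_pos : 0 < s := ht.trans_lt hs
    have admissible (x y) : ENNReal.ofReal ((-s⁻¹ • u) x + (-s⁻¹ • v) y) ≤ c (x, y) := calc
      ENNReal.ofReal ((-s⁻¹ • u) x + (-s⁻¹ • v) y)
        = ENNReal.ofReal s⁻¹ * ENNReal.ofReal (-(u x + v y)) := by
          rw [← ENNReal.ofReal_mul (inv_nonneg.2 hs_pos.le)]
          congr 1
          simp only [ContinuousMap.smul_apply, smul_eq_mul]
          ring
      _ ≤ ENNReal.ofReal s⁻¹ * (ENNReal.ofReal t * c (x, y)) := by gcongr; exact huv x y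
      _ = ENNReal.ofReal (s⁻¹ * t) * c (x, y) := by
          rw [← mul_assoc, ENNReal.ofReal_mul (inv_nonneg.2 hs_pos.le)]
      _ ≤ c (x, y) := mul_le_of_le_one_left' <| ENNReal.ofReal_le_one.2 <|
          inv_mul_le_one_of_le₀ hs.le hs_pos.le
    have h := hD _ _ admissible
    simp only [map_smul, smul_eq_mul, neg_mul] at h
    have : s * (-(s⁻¹ * I u) + -(s⁻¹ * J v)) = -(I u + J v) := by field_simp; ring
    linarith [mul_le_mul_of_nonneg_left h hs_pos.le]
  have tendsto_cost : Tendsto (fun s ↦ I u + J v + s * D) (𝓝[>] t) (𝓝 (I u + J v + t * D)) :=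
    (Continuous.tendsto (by fun_prop) t).mono_left nhdsWithin_le_nhds
  exact ge_of_tendsto tendsto_cost (eventually_mem_nhdsWithin.mono nonneg_of_lt)

theorem exists_linearMap_le_of_dual_le [CompactSpace X] [CompactSpace Y] {c : X × Y → ℝ≥0∞}
    {I : C(X, ℝ) →ₗ[ℝ] ℝ} {J : C(Y, ℝ) →ₗ[ℝ] ℝ} {D : ℝ}
    (hD : ∀ u v, (∀ x y, ENNReal.ofReal (u x + v y) ≤ c (x, y)) → I u + J v ≤ D) :
    ∃ L : C(X × Y, ℝ) →ₗ[ℝ] ℝ,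
      (∀ u v ψ, (∀ x y, ψ (x, y) ≤ u x + v y) → L ψ ≤ I u + J v) ∧
      ∀ ψ : C(X × Y, ℝ), (∀ z, ENNReal.ofReal (ψ z) ≤ c z) → L ψ ≤ D := by
  let cost : C(X, ℝ) × C(Y, ℝ) × ℝ →ₗ[ℝ] ℝ :=
    I.coprod (J.coprod (LinearMap.toSpanSingleton ℝ ℝ D))
  have cost_apply (u v t) : cost (u, v, t) = I u + (J v + t * D) := by simp [cost]
  have cost_nonneg (u v t) (h : ((u, v, t), 0) ∈ coverCone c) : 0 ≤ cost (u, v, t) := by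
    rw [cost_apply, ← add_assoc]
    exact cover_cost_nonneg hD h.1 fun x y ↦ by simpa [sub_eq_add_neg, add_comm] using h.2 x y
  let f := (cost ∘ₗ LinearMap.fst ℝ _ C(X × Y, ℝ)).toPMap (Submodule.prod ⊤ ⊥)
  have f_nonneg (p : f.domain) (hp : (p : _ × C(X × Y, ℝ)) ∈ coverCone c) : 0 ≤ f p := by
    obtain ⟨⟨⟨u, v, t⟩, ψ⟩, hψ⟩ := p
    obtain rfl : ψ = 0 := by simpa [f] using hψ
    exact cost_nonneg u v t hp
  have exists_add_mem (p) : ∃ q : f.domain, (q : _ × C(X × Y, ℝ)) + p ∈ coverCone c := by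
    obtain ⟨⟨u, v, t⟩, ψ⟩ := p
    refine ⟨⟨((.const X ‖ψ‖ - u, -v, -t), 0), by simp [f]⟩, by simp, fun x y ↦ ?_⟩
    have : ψ (x, y) ≤ ‖ψ‖ := (le_abs_self _).trans (ψ.norm_coe_le_norm (x, y))
    simpa using this
  obtain ⟨g, hgf, hg⟩ := riesz_extension (coverCone c) f f_nonneg exists_add_mem
  have hg_cost (u v t) : g ((u, v, t), 0) = cost (u, v, t) := hgf ⟨((u, v, t), 0), by simp [f]⟩
  have neg_le (u v t ψ) (h : ((u, v, t), ψ) ∈ coverCone c) :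
      -g (0, ψ) ≤ I u + (J v + t * D) := by
    have h_split : ((u, v, t), ψ) = ((u, v, t), (0 : C(X × Y, ℝ))) + (0, ψ) := by simp
    have := hg _ h
    rw [h_split, map_add, hg_cost, cost_apply] at this
    linarith
  refine ⟨-(g ∘ₗ LinearMap.inr ℝ _ _), fun u v ψ h ↦ ?_, fun ψ h ↦ ?_⟩
  · simpa using neg_le u v 0 ψ ⟨le_rfl, fun x y ↦ by simpa [sub_nonpos, add_comm] using h x y⟩
  · simpa using neg_le 0 0 1 ψ ⟨zero_le_one, fun x y ↦ by simpa using h (x, y)⟩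

theorem exists_isFiniteMeasure_integral_eq [CompactSpace X] [T2Space X] [MeasurableSpace X]
    [BorelSpace X] (L : C(X, ℝ) →ₚ[ℝ] ℝ) :
    ∃ π : Measure X, IsFiniteMeasure π ∧ ∀ f : C(X, ℝ), ∫ x, f x ∂π = L f := by
  let Λ : CompactlySupportedContinuousMap X ℝ →ₚ[ℝ] ℝ :=
    { toFun := fun f ↦ L f.toContinuousMap
      map_add' := fun f g ↦ map_add L f.toContinuousMap g.toContinuousMap
      map_smul' := fun t f ↦ map_smul L t f.toContinuousMap
      monotone' := fun _ _ h ↦ OrderHomClass.mono L h }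
  exact ⟨RealRMK.rieszMeasure Λ, inferInstance, fun f ↦ RealRMK.integral_rieszMeasure Λ
    (CompactlySupportedContinuousMap.continuousMapEquiv f)⟩

/-- Integration against a finite measure on a compact space, as a linear functional on `C(X, ℝ)`. -/
noncomputable def integralLinearMap [CompactSpace X] [MeasurableSpace X]
    [OpensMeasurableSpace X] (μ : Measure X) [IsFiniteMeasure μ] : C(X, ℝ) →ₗ[ℝ] ℝ where
  toFun u := ∫ x, u x ∂μ
  map_add' u v := integral_add ((mkOfCompact u).integrable μ) ((mkOfCompact v).integrable μ)
  map_smul' r u := integral_const_mul r u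

section Compact

variable [CompactSpace X] [T2Space X] [SecondCountableTopology X] [MeasurableSpace X]
  [BorelSpace X] [CompactSpace Y] [T2Space Y] [SecondCountableTopology Y] [MeasurableSpace Y]
  [BorelSpace Y] {μ : Measure X} {ν : Measure Y} [IsFiniteMeasure μ] [IsFiniteMeasure ν]

theorem exists_isCoupling_integral_eq {L : C(X × Y, ℝ) →ₗ[ℝ] ℝ}
    (hL : ∀ u v ψ, (∀ x y, ψ (x, y) ≤ u x + v y) →
      L ψ ≤ integralLinearMap μ u + integralLinearMap ν v) :
    ∃ π, IsCoupling π μ ν ∧ IsFiniteMeasure π ∧ ∀ ψ : C(X × Y, ℝ), ∫ z, ψ z ∂π = L ψ := by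
  have L_nonneg (ψ) (hψ : 0 ≤ ψ) : 0 ≤ L ψ := by
    simpa using hL 0 0 (-ψ) fun x y ↦ by simpa using hψ (x, y)
  have L_fst (u : C(X, ℝ)) : L (u.comp .fst) = integralLinearMap μ u := by
    refine le_antisymm (by simpa using hL u 0 (u.comp .fst) fun x y ↦ by simp) ?_
    simpa using hL (-u) 0 (-u.comp .fst) fun x y ↦ by simp
  have L_snd (v : C(Y, ℝ)) : L (v.comp .snd) = integralLinearMap ν v := by
    refine le_antisymm (by simpa using hL 0 v (v.comp .snd) fun x y ↦ by simp) ?_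
    simpa using hL 0 (-v) (-v.comp .snd) fun x y ↦ by simp
  obtain ⟨π, hπ, hπL⟩ := exists_isFiniteMeasure_integral_eq (PositiveLinearMap.mk₀ L L_nonneg)
  refine ⟨π, ⟨?_, ?_⟩, hπ, hπL⟩
  · refine ext_of_forall_integral_eq_of_IsFiniteMeasure fun u ↦ ?_
    rw [Measure.fst, integral_map measurable_fst.aemeasurable
      u.continuous.aestronglyMeasurable]
    exact (hπL (u.toContinuousMap.comp .fst)).trans (L_fst u)
  · refine ext_of_forall_integral_eq_of_IsFiniteMeasure fun v ↦ ?_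
    rw [Measure.snd, integral_map measurable_snd.aemeasurable
      v.continuous.aestronglyMeasurable]
    exact (hπL (v.toContinuousMap.comp .snd)).trans (L_snd v)

theorem transportCost_le_kantorovichDual_of_compactSpace {c : X × Y → ℝ≥0∞}
    (hc : LowerSemicontinuous c) : transportCost c μ ν ≤ kantorovichDual c μ ν := by
  by_cases h_top : kantorovichDual c μ ν = ∞
  · exact h_top ▸ le_top
  obtain ⟨L, hL, hLc⟩ := exists_linearMap_le_of_dual_le (I := integralLinearMap μ)
    (J := integralLinearMap ν) (D := (kantorovichDual c μ ν).toReal) fun u v huv ↦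
      (ENNReal.ofReal_le_iff_le_toReal h_top).1 <|
        le_kantorovichDual (u := mkOfCompact u) (v := mkOfCompact v) huv
  obtain ⟨π, hπ, hπ_fin, hπL⟩ := exists_isCoupling_integral_eq hL
  obtain ⟨φ, hφ_mono, hφ⟩ := exists_monotone_continuousMap_iSup_eq hc
  refine (iInf₂_le π hπ).trans ?_
  calc ∫⁻ z, c z ∂π = ⨆ n, ∫⁻ z, φ n z ∂π := by
        simp_rw [← hφ]
        exact lintegral_iSup (fun n ↦ (φ n).continuous.measurable.coe_nnreal_ennreal)
          fun m n hmn z ↦ ENNReal.coe_le_coe.2 (hφ_mono hmn z)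
    _ ≤ kantorovichDual c μ ν := iSup_le fun n ↦ ?_
  let ψ : C(X × Y, ℝ) := ⟨fun z ↦ φ n z, by fun_prop⟩
  have hψ_int : Integrable ψ π := (mkOfCompact ψ).integrable π
  have hψ_le (z) : ENNReal.ofReal (ψ z) ≤ c z := by
    simpa [ψ, ← hφ z] using le_iSup (fun n ↦ (φ n z : ℝ≥0∞)) n
  calc ∫⁻ z, φ n z ∂π = ENNReal.ofReal (∫ z, ψ z ∂π) := by
        rw [ofReal_integral_eq_lintegral_ofReal hψ_int (ae_of_all _ fun z ↦ (φ n z).2)]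
        simp [ψ]
    _ ≤ kantorovichDual c μ ν := by
        rw [hπL, ENNReal.ofReal_le_iff_le_toReal h_top]
        exact hLc ψ hψ_le

end Compact

end StrongDuality

theorem exists_continuousMap_isEmbedding_measurableEmbedding_hilbertCube (X : Type*)
    [TopologicalSpace X] [TopologicalSpace.MetrizableSpace X] [SecondCountableTopology X]
    [MeasurableSpace X] [BorelSpace X] [StandardBorelSpace X] :
    ∃ f : C(X, ℕ → unitInterval), IsEmbedding f ∧ MeasurableEmbedding f := by
  let := TopologicalSpace.metrizableSpaceMetric X
  obtain ⟨f, hf⟩ := Metric.PiNatEmbed.exists_embedding_to_hilbert_cube (X := X)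
  exact ⟨⟨f, hf.continuous⟩, hf, hf.continuous.measurable.measurableEmbedding hf.injective⟩

theorem kantorovich_duality_general {X Y : Type*}
    [TopologicalSpace X] [TopologicalSpace.MetrizableSpace X] [SecondCountableTopology X]
    [MeasurableSpace X] [BorelSpace X] [StandardBorelSpace X]
    [TopologicalSpace Y] [TopologicalSpace.MetrizableSpace Y] [SecondCountableTopology Y]
    [MeasurableSpace Y] [BorelSpace Y] [StandardBorelSpace Y]
    {c : X × Y → ℝ≥0∞} (hc : LowerSemicontinuous c) (μ : Measure X) (ν : Measure Y)
    [IsFiniteMeasure μ] [IsFiniteMeasure ν] :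
    transportCost c μ ν = kantorovichDual c μ ν := by
  refine le_antisymm ?_ kantorovichDual_le_transportCost
  obtain ⟨f, hf, hfm⟩ := exists_continuousMap_isEmbedding_measurableEmbedding_hilbertCube X
  obtain ⟨g, hg, hgm⟩ := exists_continuousMap_isEmbedding_measurableEmbedding_hilbertCube Y
  obtain ⟨c', hc', rfl⟩ := exists_lowerSemicontinuous_comp_eq (hf.prodMap hg).isInducing hc
  calc transportCost (c' ∘ Prod.map f g) μ ν
      ≤ transportCost c' (μ.map f) (ν.map g) := transportCost_comp_le_map hfm hgm
    _ ≤ kantorovichDual c' (μ.map f) (ν.map g) :=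
        transportCost_le_kantorovichDual_of_compactSpace hc'
    _ ≤ kantorovichDual (c' ∘ Prod.map f g) μ ν := kantorovichDual_map_le c' f g

/-- Kantorovich dual equality: the optimal transport cost equals the supremum of
`∫ u dν + ∫ v dμ` over bounded continuous `u, v` with `u(x) + v(y) ≤ c(x,y)`. -/
theorem kantorovich_duality {X : Type*} [TopologicalSpace X] [PolishSpace X]
    [MeasurableSpace X] [BorelSpace X]
    (c : X → X → ℝ) (hc_nonneg : ∀ x y, 0 ≤ c x y)
    (hc_lsc : LowerSemicontinuous fun p : X × X => c p.1 p.2)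
    (ν μ : Measure X) [IsProbabilityMeasure ν] [IsProbabilityMeasure μ] :
    optCost c ν μ =
      ⨆ (u : BoundedContinuousFunction X ℝ) (v : BoundedContinuousFunction X ℝ)
        (_ : ∀ x y, u x + v y ≤ c x y),
        ENNReal.ofReal (∫ x, u x ∂ν + ∫ y, v y ∂μ) := by
  have hc : LowerSemicontinuous fun p : X × X ↦ ENNReal.ofReal (c p.1 p.2) :=
    ENNReal.continuous_ofReal.comp_lowerSemicontinuous hc_lsc ENNReal.ofReal_mono
  have h := kantorovich_duality_general hc ν μ
  simp only [kantorovichDual, ENNReal.ofReal_le_ofReal_iff (hc_nonneg _ _)] at h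
  exact h
end

section
/- (Kantorovich–Rubinstein theorem) Let d be a lower semicontinuous metric on a Polish space 𝒳 (possibly different from the metric turning 𝒳 into a Polish space), and let μ, ν ∈ P₁, i.e. ∫ d(x₀,x) dν(x) < ∞ and ∫ d(x₀,x) dμ(x) < ∞ for some x₀ ∈ 𝒳. Then 𝒯_d(ν,μ) = sup { ∫_𝒳 u dν − ∫_𝒳 u dμ : u Borel measurable with |u(x) − u(y)| ≤ d(x,y) for all x,y ∈ 𝒳 }. -/
open MeasureTheory ENNReal

/-!
Kantorovich duality for a lower semicontinuous cost `c ≥ 0` comes from the M. Riesz extension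
theorem: embed both spaces in compact metrizable ones and extend the functional
`φ x - ψ y ↦ ∫ φ dν - ∫ ψ dμ` to all continuous functions on the product, as a positive functional
that is at most the dual value `S` on every continuous `g ≤ c`. By Riesz–Markov–Kakutani the
extension is a coupling. It lives on the original spaces because its marginals do, and by Fatou's
lemma its cost is at most `S`, since `c` is a limit of continuous functions `g ≤ c`.

For a pseudometric cost `d`, a dual pair `φ x - ψ y ≤ d x y` is improved to the single `1`-Lipschitz
function `u x = inf_y (ψ y + d x y)`, which satisfies `φ ≤ u ≤ ψ`. With `y` ranging over the whole
space `u` need not be Borel; with `y` in a compact set `K` it is lower semicontinuous, still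
satisfies `φ ≤ u`, and `u ≤ ψ` on `K`. Tightness controls the error outside `K`.
-/

open Filter Topology BoundedContinuousFunction Set
open scoped NNReal

/-! ### Inf-convolution -/

section InfConv

variable {X Y : Type*}

/-- The inf-convolution `x ↦ inf_y (ψ y + c x y)` of `ψ` with a kernel `c`; up to signs this is the
`c`-transform of optimal transport. Being a real infimum, it is `0` where the family is empty or
unbounded below. -/
noncomputable def infConv (c : X → Y → ℝ) (ψ : Y → ℝ) (x : X) : ℝ :=
  ⨅ y, (ψ y + c x y)

variable {c : X → Y → ℝ} {ψ : Y → ℝ}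

lemma infConv_le {x : X} (hx : BddBelow (range fun y => ψ y + c x y)) (y : Y) :
    infConv c ψ x ≤ ψ y + c x y :=
  ciInf_le hx y

lemma le_infConv [Nonempty Y] {x : X} {a : ℝ} (h : ∀ y, a ≤ ψ y + c x y) : a ≤ infConv c ψ x :=
  le_ciInf h

lemma infConv_le_infConv_add [Nonempty Y] {x x' : X} {e : ℝ}
    (hx : BddBelow (range fun y => ψ y + c x y)) (h : ∀ y, c x y ≤ c x' y + e) :
    infConv c ψ x ≤ infConv c ψ x' + e := by
  rw [← sub_le_iff_le_add]
  refine le_infConv fun y => ?_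
  linarith [infConv_le hx y, h y]

lemma lowerSemicontinuous_infConv [TopologicalSpace X] [TopologicalSpace Y] [CompactSpace Y]
    [Nonempty Y] (h : LowerSemicontinuous fun p : X × Y => ψ p.2 + c p.1 p.2) :
    LowerSemicontinuous (infConv c ψ) := by
  intro x a ha
  have hsection : LowerSemicontinuous fun y => ψ y + c x y :=
    h.comp (Continuous.prodMk_right x)
  have hbdd : BddBelow (range fun y => ψ y + c x y) := by
    simpa using (hsection.lowerSemicontinuousOn univ).bddBelow_of_isCompact isCompact_univ
  obtain ⟨b, hab, hb⟩ := exists_between ha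
  have hnear : ∀ᶠ z in 𝓝 x, ∀ y ∈ univ, b < ψ y + c z y :=
    isCompact_univ.eventually_forall_of_forall_eventually fun y _ =>
      h (x, y) b (hb.trans_le (infConv_le hbdd y))
  filter_upwards [hnear] with z hz
  exact hab.trans_le (le_infConv fun y => (hz y (mem_univ y)).le)

end InfConv

/-! ### Lipschitz approximation of lower semicontinuous functions -/

section LipschitzEnvelope

variable {Z Y : Type*} [PseudoMetricSpace Y]

/-- The Pasch–Hausdorff envelope `y ↦ inf_z (c z + n * dist y (j z))`. For `j = id` it is the
largest `n`-Lipschitz minorant of `c`; the map `j` allows `c` to live on a subspace of `Y`. -/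
noncomputable def lipschitzEnvelope (j : Z → Y) (c : Z → ℝ) (n : ℝ≥0) : Y → ℝ :=
  infConv (fun y z => n * dist y (j z)) c

variable {j : Z → Y} {c : Z → ℝ}

lemma lipschitzEnvelope_nonneg (hc : ∀ z, 0 ≤ c z) (n : ℝ≥0) (y : Y) :
    0 ≤ lipschitzEnvelope j c n y :=
  Real.iInf_nonneg fun z => add_nonneg (hc z) (by positivity)

lemma bddBelow_range_add_mul_dist (hc : ∀ z, 0 ≤ c z) (n : ℝ≥0) (y : Y) :
    BddBelow (range fun z => c z + n * dist y (j z)) :=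
  ⟨0, forall_mem_range.2 fun z => add_nonneg (hc z) (by positivity)⟩

lemma lipschitzEnvelope_comp_le (hc : ∀ z, 0 ≤ c z) (n : ℝ≥0) (z : Z) :
    lipschitzEnvelope j c n (j z) ≤ c z :=
  (infConv_le (bddBelow_range_add_mul_dist hc n (j z)) z).trans_eq (by simp)

lemma lipschitzWith_lipschitzEnvelope [Nonempty Z] (hc : ∀ z, 0 ≤ c z) (n : ℝ≥0) :
    LipschitzWith n (lipschitzEnvelope j c n) := by
  refine LipschitzWith.of_le_add_mul n fun y y' => ?_
  refine infConv_le_infConv_add (bddBelow_range_add_mul_dist hc n y) fun z => ?_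
  calc n * dist y (j z) ≤ n * (dist y y' + dist y' (j z)) := by gcongr; exact dist_triangle ..
    _ = n * dist y' (j z) + n * dist y y' := by ring

lemma eventually_le_lipschitzEnvelope_comp [TopologicalSpace Z] (hj : IsInducing j)
    (hc : ∀ z, 0 ≤ c z) {z : Z} {b : ℝ} (hb : ∀ᶠ w in 𝓝 z, b < c w) :
    ∀ᶠ n in atTop, b ≤ lipschitzEnvelope j c n (j z) := by
  have : Nonempty Z := ⟨z⟩
  rw [hj.nhds_eq_comap, (Metric.nhds_basis_ball.comap j).eventually_iff] at hb
  obtain ⟨r, hr, hball⟩ := hb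
  filter_upwards [eventually_ge_atTop (b / r).toNNReal] with n hn
  refine le_infConv fun w => ?_
  rcases lt_or_ge (dist (j z) (j w)) r with hw | hw
  · have : b < c w := hball (by simpa [dist_comm] using hw)
    have : 0 ≤ n * dist (j z) (j w) := by positivity
    linarith
  · have hnr : b ≤ n * r := (div_le_iff₀ hr).1 (Real.toNNReal_le_iff_le_coe.1 hn)
    have : (n : ℝ) * r ≤ n * dist (j z) (j w) := by gcongr
    linarith [hc w]

lemma tendsto_lipschitzEnvelope_comp [TopologicalSpace Z] (hj : IsInducing j)
    (hc : ∀ z, 0 ≤ c z) {z : Z} (hcz : LowerSemicontinuousAt c z) :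
    Tendsto (fun n => lipschitzEnvelope j c n (j z)) atTop (𝓝 (c z)) := by
  refine tendsto_order.2 ⟨fun a ha => ?_, fun a ha => ?_⟩
  · obtain ⟨b, hab, hb⟩ := exists_between ha
    filter_upwards [eventually_le_lipschitzEnvelope_comp hj hc (hcz b hb)] with n hn
    exact hab.trans_le hn
  · exact .of_forall fun n => (lipschitzEnvelope_comp_le hc n z).trans_lt ha

end LipschitzEnvelope

/-! ### Positive functionals and measures -/

lemma integrable_continuousMap {K : Type*} [TopologicalSpace K] [CompactSpace K]
    [MeasurableSpace K] [OpensMeasurableSpace K] (ν : Measure K) [IsFiniteMeasure ν]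
    (φ : C(K, ℝ)) : Integrable φ ν :=
  (mkOfCompact φ).integrable ν

lemma lintegral_ofReal_le_of_forall_continuousMap_le {Z Y : Type*} [TopologicalSpace Z]
    [MeasurableSpace Z] [TopologicalSpace Y] [CompactSpace Y]
    [TopologicalSpace.PseudoMetrizableSpace Y] [MeasurableSpace Y] [OpensMeasurableSpace Y]
    {π : Measure Z} [IsFiniteMeasure π] {j : Z → Y} (hj : IsInducing j) (hj_meas : Measurable j)
    {c : Z → ℝ} (hc_nonneg : ∀ z, 0 ≤ c z) (hc : LowerSemicontinuous c) {S : ℝ}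
    (h : ∀ g : C(Y, ℝ), (∀ z, g (j z) ≤ c z) → ∫ z, g (j z) ∂π ≤ S) :
    ∫⁻ z, ENNReal.ofReal (c z) ∂π ≤ ENNReal.ofReal S := by
  rcases isEmpty_or_nonempty Z with _ | _
  · simp [Measure.eq_zero_of_isEmpty π]
  let _ := TopologicalSpace.pseudoMetrizableSpacePseudoMetric Y
  let g (n : ℕ) : C(Y, ℝ) :=
    ⟨lipschitzEnvelope j c n, (lipschitzWith_lipschitzEnvelope hc_nonneg n).continuous⟩
  have hg_meas (n : ℕ) : Measurable fun z => g n (j z) := (g n).continuous.measurable.comp hj_meas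
  have hg_int (n : ℕ) : Integrable (fun z => g n (j z)) π :=
    (integrable_continuousMap (π.map j) (g n)).comp_measurable hj_meas
  have hg_tendsto (z : Z) : Tendsto (fun n => ENNReal.ofReal (g n (j z))) atTop
      (𝓝 (ENNReal.ofReal (c z))) :=
    ENNReal.tendsto_ofReal
      ((tendsto_lipschitzEnvelope_comp hj hc_nonneg (hc z)).comp tendsto_natCast_atTop_atTop)
  have hg_le (n : ℕ) : ∫⁻ z, ENNReal.ofReal (g n (j z)) ∂π ≤ ENNReal.ofReal S := by
    rw [← ofReal_integral_eq_lintegral_ofReal (hg_int n)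
      (.of_forall fun z => lipschitzEnvelope_nonneg hc_nonneg n (j z))]
    exact ENNReal.ofReal_le_ofReal (h (g n) (lipschitzEnvelope_comp_le hc_nonneg n))
  calc ∫⁻ z, ENNReal.ofReal (c z) ∂π
      = ∫⁻ z, liminf (fun n => ENNReal.ofReal (g n (j z))) atTop ∂π :=
        lintegral_congr fun z => (hg_tendsto z).liminf_eq.symm
    _ ≤ liminf (fun n => ∫⁻ z, ENNReal.ofReal (g n (j z)) ∂π) atTop :=
        lintegral_liminf_le fun n => (hg_meas n).ennreal_ofReal
    _ ≤ liminf (fun _ => ENNReal.ofReal S) atTop := liminf_le_liminf (.of_forall hg_le)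
    _ = ENNReal.ofReal S := liminf_const _

lemma measure_eq_of_forall_integral_le {Ω : Type*} [MeasurableSpace Ω] [TopologicalSpace Ω]
    [HasOuterApproxClosed Ω] [BorelSpace Ω] {P Q : Measure Ω} [IsFiniteMeasure P]
    [IsFiniteMeasure Q] (h : ∀ f : Ω →ᵇ ℝ, ∫ x, f x ∂P ≤ ∫ x, f x ∂Q) : P = Q := by
  refine ext_of_forall_integral_eq_of_IsFiniteMeasure fun f => (h f).antisymm ?_
  simpa [integral_neg] using h (-f)

lemma exists_measure_forall_integral_eq {Z : Type*} [TopologicalSpace Z] [CompactSpace Z]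
    [T2Space Z] [MeasurableSpace Z] [BorelSpace Z] (G : C(Z, ℝ) →ₗ[ℝ] ℝ)
    (hG : ∀ f : C(Z, ℝ), 0 ≤ f → 0 ≤ G f) :
    ∃ π : Measure Z, IsFiniteMeasure π ∧ ∀ f : C(Z, ℝ), ∫ z, f z ∂π = G f := by
  let Λ : CompactlySupportedContinuousMap Z ℝ →ₚ[ℝ] ℝ := PositiveLinearMap.mk₀
    { toFun f := G f.toContinuousMap
      map_add' f g := map_add G f.toContinuousMap g.toContinuousMap
      map_smul' a f := map_smul G a f.toContinuousMap }
    fun f hf => hG f.toContinuousMap hf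
  exact ⟨RealRMK.rieszMeasure Λ, inferInstance, fun f =>
    RealRMK.integral_rieszMeasure Λ (CompactlySupportedContinuousMap.continuousMapEquiv f)⟩

/-- The M. Riesz extension theorem for a functional given on the second factor of a product. -/
lemma exists_linearMap_forall_mem_nonneg {E W : Type*} [AddCommGroup E] [Module ℝ E]
    [AddCommGroup W] [Module ℝ W] (s : PointedCone ℝ (E × W)) (l : W →ₗ[ℝ] ℝ)
    (h_nonneg : ∀ w, ((0 : E), w) ∈ s → 0 ≤ l w) (h_dense : ∀ f : E, ∃ w, (f, w) ∈ s) :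
    ∃ G : E →ₗ[ℝ] ℝ, ∀ f w, (f, w) ∈ s → 0 ≤ G f + l w := by
  let D : E × W →ₗ.[ℝ] ℝ :=
    { domain := LinearMap.ker (LinearMap.fst ℝ E W)
      toFun := (l ∘ₗ LinearMap.snd ℝ E W).domRestrict _ }
  have mem_domain (w : W) : ((0 : E), w) ∈ D.domain := by simp [D]
  obtain ⟨F, hFD, hFs⟩ := riesz_extension s D
    (by
      rintro ⟨⟨f, w⟩, hf⟩ hs
      obtain rfl : f = 0 := hf
      exact h_nonneg w hs)
    (by
      rintro ⟨f, w⟩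
      obtain ⟨w', hw'⟩ := h_dense f
      exact ⟨⟨(0, w' - w), mem_domain _⟩, by simpa using hw'⟩)
  refine ⟨F ∘ₗ LinearMap.inl ℝ E W, fun f w hs => ?_⟩
  have hFw : F (0, w) = l w := hFD ⟨(0, w), mem_domain w⟩
  calc 0 ≤ F (f, w) := hFs _ hs
    _ = F (f, 0) + F (0, w) := by rw [← map_add]; simp
    _ = F (f, 0) + l w := by rw [hFw]

/-! ### Couplings and Kantorovich duality -/

/-- `π` is a coupling (transport plan) of `ν` and `μ`. -/
structure IsCoupling_s5 {X Y : Type*} [MeasurableSpace X] [MeasurableSpace Y]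
    (π : Measure (X × Y)) (ν : Measure X) (μ : Measure Y) : Prop where
  map_fst : π.map Prod.fst = ν
  map_snd : π.map Prod.snd = μ

namespace IsCoupling_s5

variable {X Y K L : Type*} [MeasurableSpace X] [MeasurableSpace Y] [MeasurableSpace K]
  [MeasurableSpace L] {ν : Measure X} {μ : Measure Y}

lemma isFiniteMeasure {π : Measure (X × Y)} (hπ : IsCoupling_s5 π ν μ) [IsFiniteMeasure ν] :
    IsFiniteMeasure π := by
  have : IsFiniteMeasure (π.map Prod.fst) := hπ.map_fst ▸ inferInstance
  exact Measure.isFiniteMeasure_of_map measurable_fst.aemeasurable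

lemma ae_mem_range_prodMap {ι : X → K} {κ : Y → L} (hι : MeasurableEmbedding ι)
    (hκ : MeasurableEmbedding κ) {π : Measure (K × L)}
    (hπ : IsCoupling_s5 π (ν.map ι) (μ.map κ)) : ∀ᵐ p ∂π, p ∈ range (Prod.map ι κ) := by
  have hfst : ∀ᵐ p ∂π, p.1 ∈ range ι := by
    refine ae_of_ae_map measurable_fst.aemeasurable ?_
    rw [hπ.map_fst, hι.ae_map_iff]
    exact .of_forall mem_range_self
  have hsnd : ∀ᵐ p ∂π, p.2 ∈ range κ := by
    refine ae_of_ae_map measurable_snd.aemeasurable ?_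
    rw [hπ.map_snd, hκ.ae_map_iff]
    exact .of_forall mem_range_self
  filter_upwards [hfst, hsnd] with p h₁ h₂
  rw [range_prodMap]
  exact ⟨h₁, h₂⟩

lemma exists_map_prodMap_eq {ι : X → K} {κ : Y → L} (hι : MeasurableEmbedding ι)
    (hκ : MeasurableEmbedding κ) {π : Measure (K × L)}
    (hπ : IsCoupling_s5 π (ν.map ι) (μ.map κ)) :
    ∃ ρ : Measure (X × Y), ρ.map (Prod.map ι κ) = π ∧ IsCoupling_s5 ρ ν μ := by
  have hικ := hι.prodMap hκ
  obtain ⟨ρ, rfl⟩ : ∃ ρ : Measure (X × Y), ρ.map (Prod.map ι κ) = π :=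
    ⟨π.comap (Prod.map ι κ), by
      rw [hικ.map_comap, Measure.restrict_eq_self_of_ae_mem (hπ.ae_mem_range_prodMap hι hκ)]⟩
  refine ⟨ρ, rfl, ⟨?_, ?_⟩⟩
  · rw [← hι.comap_map ν, ← hπ.map_fst, Measure.map_map measurable_fst hικ.measurable,
      Prod.map_fst', ← Measure.map_map hι.measurable measurable_fst, hι.comap_map]
  · rw [← hκ.comap_map μ, ← hπ.map_snd, Measure.map_map measurable_snd hικ.measurable,
      Prod.map_snd', ← Measure.map_map hκ.measurable measurable_snd, hκ.comap_map]

lemma ofReal_integral_sub_integral_le {π : Measure (X × Y)} (hπ : IsCoupling_s5 π ν μ)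
    {φ : X → ℝ} {ψ : Y → ℝ} (hφ : Integrable φ ν) (hψ : Integrable ψ μ) {c : X → Y → ℝ}
    (h : ∀ x y, φ x - ψ y ≤ c x y) :
    ENNReal.ofReal (∫ x, φ x ∂ν - ∫ y, ψ y ∂μ) ≤ ∫⁻ p, ENNReal.ofReal (c p.1 p.2) ∂π := by
  obtain ⟨rfl, rfl⟩ := hπ
  have hφ' : Integrable (fun p : X × Y => φ p.1) π := hφ.comp_measurable measurable_fst
  have hψ' : Integrable (fun p : X × Y => ψ p.2) π := hψ.comp_measurable measurable_snd
  rw [integral_map measurable_fst.aemeasurable hφ.aestronglyMeasurable,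
    integral_map measurable_snd.aemeasurable hψ.aestronglyMeasurable, ← integral_sub hφ' hψ']
  calc ENNReal.ofReal (∫ p, (φ p.1 - ψ p.2) ∂π)
      ≤ ENNReal.ofReal (∫ p, max (φ p.1 - ψ p.2) 0 ∂π) :=
        ENNReal.ofReal_le_ofReal
          (integral_mono (hφ'.sub hψ') (hφ'.sub hψ').pos_part fun _ => le_max_left _ _)
    _ = ∫⁻ p, ENNReal.ofReal (max (φ p.1 - ψ p.2) 0) ∂π :=
        ofReal_integral_eq_lintegral_ofReal (hφ'.sub hψ').pos_part
          (.of_forall fun _ => le_max_right _ _)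
    _ ≤ ∫⁻ p, ENNReal.ofReal (c p.1 p.2) ∂π :=
        lintegral_mono fun p => by simpa using ENNReal.ofReal_le_ofReal (h p.1 p.2)

end IsCoupling_s5

section CompactDuality

variable {Z K L : Type*} [TopologicalSpace K] [TopologicalSpace L]

/-- The cone of all `(f, φ, ψ, r)` for which `φ ⊖ ψ ≤ f + t c` on `Z` and `t S ≤ r` for some
`t ≥ 0`. Nonnegativity of `(f, φ, ψ, r) ↦ G f + (r - (∫ φ - ∫ ψ))` on it says exactly what is
needed of a transport plan `G`: positivity, the marginals, and `G g ≤ S` whenever `g ≤ c`. -/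
def transportCone (j : Z → K × L) (c : Z → ℝ) (S : ℝ) :
    PointedCone ℝ (C(K × L, ℝ) × C(K, ℝ) × C(L, ℝ) × ℝ) where
  carrier := {q | ∃ t : ℝ, 0 ≤ t ∧ t * S ≤ q.2.2.2 ∧
    ∀ z, q.2.1 (j z).1 - q.2.2.1 (j z).2 ≤ q.1 (j z) + t * c z}
  add_mem' := by
    rintro ⟨f, φ, ψ, r⟩ ⟨f', φ', ψ', r'⟩ ⟨t, ht, hr, h⟩ ⟨t', ht', hr', h'⟩
    refine ⟨t + t', add_nonneg ht ht', ?_, fun z => ?_⟩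
    · simp only [Prod.mk_add_mk]
      linarith
    · simp only [Prod.mk_add_mk, ContinuousMap.add_apply]
      linarith [h z, h' z]
  zero_mem' := ⟨0, le_rfl, by simp, by simp⟩
  smul_mem' := by
    rintro ⟨a, ha⟩ ⟨f, φ, ψ, r⟩ ⟨t, ht, hr, h⟩
    refine ⟨a * t, mul_nonneg ha ht, ?_, fun z => ?_⟩
    · simpa [mul_assoc] using mul_le_mul_of_nonneg_left hr ha
    · simpa [mul_sub, mul_add, mul_assoc] using mul_le_mul_of_nonneg_left (h z) ha

lemma mem_transportCone {j : Z → K × L} {c : Z → ℝ} {S : ℝ} {f : C(K × L, ℝ)} {φ : C(K, ℝ)}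
    {ψ : C(L, ℝ)} {r : ℝ} :
    (f, φ, ψ, r) ∈ transportCone j c S ↔ ∃ t : ℝ, 0 ≤ t ∧ t * S ≤ r ∧
      ∀ z, φ (j z).1 - ψ (j z).2 ≤ f (j z) + t * c z :=
  Iff.rfl

lemma integral_sub_integral_le_mul [MeasurableSpace K] [MeasurableSpace L]
    {j : Z → K × L} {c : Z → ℝ} {ν : Measure K} {μ : Measure L} {S : ℝ} (hc : ∀ z, 0 ≤ c z)
    (hS : ∀ (φ : C(K, ℝ)) (ψ : C(L, ℝ)), (∀ z, φ (j z).1 - ψ (j z).2 ≤ c z) →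
      ∫ x, φ x ∂ν - ∫ y, ψ y ∂μ ≤ S)
    {t : ℝ} (ht : 0 ≤ t) {φ : C(K, ℝ)} {ψ : C(L, ℝ)}
    (h : ∀ z, φ (j z).1 - ψ (j z).2 ≤ t * c z) :
    ∫ x, φ x ∂ν - ∫ y, ψ y ∂μ ≤ t * S := by
  have of_pos {τ : ℝ} (hτ : 0 < τ) (hle : t ≤ τ) : ∫ x, φ x ∂ν - ∫ y, ψ y ∂μ ≤ τ * S := by
    have := hS (τ⁻¹ • φ) (τ⁻¹ • ψ) fun z => by
      simp only [ContinuousMap.smul_apply, smul_eq_mul, ← mul_sub]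
      exact (inv_mul_le_iff₀ hτ).2 ((h z).trans (mul_le_mul_of_nonneg_right hle (hc z)))
    simp only [ContinuousMap.smul_apply, smul_eq_mul, integral_const_mul, ← mul_sub] at this
    exact (inv_mul_le_iff₀ hτ).1 this
  -- Letting `τ` decrease to `t` also covers `t = 0`, where one cannot divide by `t`.
  have hlim : Tendsto (fun τ : ℝ => τ * S) (𝓝[>] t) (𝓝 (t * S)) :=
    (Continuous.tendsto (by fun_prop) t).mono_left nhdsWithin_le_nhds
  refine ge_of_tendsto hlim ?_
  filter_upwards [self_mem_nhdsWithin] with τ hτ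
  exact of_pos (ht.trans_lt hτ) (le_of_lt hτ)

variable [CompactSpace K] [MeasurableSpace K] [BorelSpace K] [CompactSpace L] [MeasurableSpace L]
  [BorelSpace L]

/-- The gap `r - (∫ φ dν - ∫ ψ dμ)` between a bound `r` and the dual functional of Kantorovich,
as a linear function of `(φ, ψ, r)`. -/
noncomputable def dualGap (ν : Measure K) (μ : Measure L) [IsFiniteMeasure ν] [IsFiniteMeasure μ] :
    C(K, ℝ) × C(L, ℝ) × ℝ →ₗ[ℝ] ℝ where
  toFun w := w.2.2 - (∫ x, w.1 x ∂ν - ∫ y, w.2.1 y ∂μ)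
  map_add' w w' := by
    simp only [Prod.fst_add, Prod.snd_add, ContinuousMap.add_apply]
    rw [integral_add (integrable_continuousMap ν _) (integrable_continuousMap ν _),
      integral_add (integrable_continuousMap μ _) (integrable_continuousMap μ _)]
    ring
  map_smul' a w := by
    simp [integral_const_mul, mul_sub]

variable {j : Z → K × L} {c : Z → ℝ} {ν : Measure K} {μ : Measure L} [IsFiniteMeasure ν]
  [IsFiniteMeasure μ] {S : ℝ}

lemma exists_linearMap_forall_integral_sub_integral_le (hc : ∀ z, 0 ≤ c z)
    (hS : ∀ (φ : C(K, ℝ)) (ψ : C(L, ℝ)), (∀ z, φ (j z).1 - ψ (j z).2 ≤ c z) →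
      ∫ x, φ x ∂ν - ∫ y, ψ y ∂μ ≤ S) :
    ∃ G : C(K × L, ℝ) →ₗ[ℝ] ℝ,
      (∀ (f : C(K × L, ℝ)) (φ : C(K, ℝ)) (ψ : C(L, ℝ)), (∀ x y, φ x - ψ y ≤ f (x, y)) →
        ∫ x, φ x ∂ν - ∫ y, ψ y ∂μ ≤ G f) ∧
      ∀ g : C(K × L, ℝ), (∀ z, g (j z) ≤ c z) → G g ≤ S := by
  obtain ⟨G, hG⟩ := exists_linearMap_forall_mem_nonneg (transportCone j c S) (dualGap ν μ)
    (by
      rintro ⟨φ, ψ, r⟩ hmem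
      obtain ⟨t, ht, hr, h⟩ := mem_transportCone.1 hmem
      refine sub_nonneg.2 ((integral_sub_integral_le_mul hc hS ht fun z => ?_).trans hr)
      simpa using h z)
    (fun f => ⟨(-ContinuousMap.const K ‖f‖, 0, 0), mem_transportCone.2
      ⟨0, le_rfl, by simp, fun z => by simpa using neg_le_of_abs_le (f.norm_coe_le_norm (j z))⟩⟩)
  refine ⟨G, fun f φ ψ h => ?_, fun g hg => ?_⟩
  · have := hG f (φ, ψ, 0) (mem_transportCone.2
      ⟨0, le_rfl, by simp, fun z => by simpa using h (j z).1 (j z).2⟩)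
    simp only [dualGap, LinearMap.coe_mk, AddHom.coe_mk] at this
    linarith
  · have := hG (-g) (0, 0, S) (mem_transportCone.2
      ⟨1, zero_le_one, by simp, fun z => by simpa using hg z⟩)
    simpa [dualGap] using this

variable [T2Space K] [SecondCountableTopology K] [T2Space L] [SecondCountableTopology L]

lemma exists_isCoupling_forall_integral_le (hc : ∀ z, 0 ≤ c z)
    (hS : ∀ (φ : C(K, ℝ)) (ψ : C(L, ℝ)), (∀ z, φ (j z).1 - ψ (j z).2 ≤ c z) →
      ∫ x, φ x ∂ν - ∫ y, ψ y ∂μ ≤ S) :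
    ∃ π : Measure (K × L), IsCoupling_s5 π ν μ ∧
      ∀ g : C(K × L, ℝ), (∀ z, g (j z) ≤ c z) → ∫ p, g p ∂π ≤ S := by
  obtain ⟨G, hG_ge, hG_le⟩ := exists_linearMap_forall_integral_sub_integral_le hc hS
  obtain ⟨π, hπ_fin, hπ⟩ := exists_measure_forall_integral_eq G fun f hf => by
    simpa using hG_ge f 0 0 fun x y => by simpa using hf (x, y)
  refine ⟨π, ⟨?_, ?_⟩, fun g hg => (hπ g).trans_le (hG_le g hg)⟩
  · refine (measure_eq_of_forall_integral_le fun φ => ?_).symm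
    rw [integral_map measurable_fst.aemeasurable φ.continuous.aestronglyMeasurable]
    simpa [← hπ] using hG_ge (φ.toContinuousMap.comp .fst) φ.toContinuousMap 0 (by simp)
  · refine (measure_eq_of_forall_integral_le fun ψ => ?_).symm
    rw [integral_map measurable_snd.aemeasurable ψ.continuous.aestronglyMeasurable]
    simpa [← hπ, integral_neg] using
      hG_ge (ψ.toContinuousMap.comp .snd) 0 (-ψ.toContinuousMap) (by simp)

end CompactDuality

section PolishDuality

lemma exists_isEmbedding_hilbertCube (X : Type*) [TopologicalSpace X]
    [TopologicalSpace.MetrizableSpace X] [TopologicalSpace.SeparableSpace X] :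
    ∃ ι : X → ℕ → unitInterval, IsEmbedding ι :=
  let _ := TopologicalSpace.metrizableSpaceMetric X
  Metric.PiNatEmbed.exists_embedding_to_hilbert_cube

variable {X Y : Type*} [TopologicalSpace X] [PolishSpace X] [MeasurableSpace X] [BorelSpace X]
  [TopologicalSpace Y] [PolishSpace Y] [MeasurableSpace Y] [BorelSpace Y]

/-- **Kantorovich duality**: the dual value of the transport problem is attained by a coupling. -/
theorem exists_isCoupling_lintegral_le {c : X × Y → ℝ} (hc_nonneg : ∀ p, 0 ≤ c p)
    (hc : LowerSemicontinuous c) (ν : Measure X) (μ : Measure Y) [IsFiniteMeasure ν]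
    [IsFiniteMeasure μ] {S : ℝ}
    (hS : ∀ (φ : X →ᵇ ℝ) (ψ : Y →ᵇ ℝ), (∀ x y, φ x - ψ y ≤ c (x, y)) →
      ∫ x, φ x ∂ν - ∫ y, ψ y ∂μ ≤ S) :
    ∃ π : Measure (X × Y), IsCoupling_s5 π ν μ ∧
      ∫⁻ p, ENNReal.ofReal (c p) ∂π ≤ ENNReal.ofReal S := by
  obtain ⟨ι, hι⟩ := exists_isEmbedding_hilbertCube X
  obtain ⟨κ, hκ⟩ := exists_isEmbedding_hilbertCube Y
  have hι_meas := hι.continuous.measurableEmbedding hι.injective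
  have hκ_meas := hκ.continuous.measurableEmbedding hκ.injective
  obtain ⟨π', hπ', hπ'_le⟩ := exists_isCoupling_forall_integral_le (j := Prod.map ι κ)
    (ν := ν.map ι) (μ := μ.map κ) (S := S) hc_nonneg fun φ ψ h => by
      rw [hι_meas.integral_map, hκ_meas.integral_map]
      exact hS ((mkOfCompact φ).compContinuous ⟨ι, hι.continuous⟩)
        ((mkOfCompact ψ).compContinuous ⟨κ, hκ.continuous⟩) fun x y => h (x, y)
  obtain ⟨π, rfl, hπ⟩ := hπ'.exists_map_prodMap_eq hι_meas hκ_meas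
  have hικ_meas := hι_meas.prodMap hκ_meas
  have := hπ.isFiniteMeasure
  refine ⟨π, hπ, lintegral_ofReal_le_of_forall_continuousMap_le
    (hι.isInducing.prodMap hκ.isInducing) hικ_meas.measurable hc_nonneg hc fun g hg => ?_⟩
  rw [← hικ_meas.integral_map]
  exact hπ'_le g hg

end PolishDuality

/-! ### Lipschitz functions for a lower semicontinuous pseudometric -/

section Tightness

variable {X : Type*} [TopologicalSpace X] [PolishSpace X] [MeasurableSpace X]
  [OpensMeasurableSpace X]

lemma exists_isCompact_superset_setLIntegral_compl_lt (μ : Measure X) {h : X → ℝ≥0∞}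
    (hh : ∫⁻ x, h x ∂μ ≠ ∞) {s : Set X} (hs : IsCompact s) {ε : ℝ≥0∞} (hε : 0 < ε) :
    ∃ K, s ⊆ K ∧ IsCompact K ∧ ∫⁻ x in Kᶜ, h x ∂μ < ε := by
  let _ := TopologicalSpace.upgradeIsCompletelyMetrizable X
  have : IsFiniteMeasure (μ.withDensity h) := isFiniteMeasure_withDensity hh
  obtain ⟨K, hK, hKε⟩ := exists_isCompact_closure_measure_compl_lt (μ.withDensity h) ε hε
  have hKs : IsCompact (closure K ∪ s) := hK.union hs
  refine ⟨closure K ∪ s, subset_union_right, hKs, ?_⟩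
  rw [← withDensity_apply _ hKs.measurableSet.compl]
  refine (measure_mono (compl_subset_compl.2 ?_)).trans_lt hKε
  exact subset_closure.trans subset_union_left

end Tightness

section Pseudometric

variable {X : Type*} {d : PseudoMetric X ℝ}

lemma integrable_of_forall_abs_sub_le [MeasurableSpace X] {ρ : Measure X} [IsFiniteMeasure ρ]
    {x₀ : X} (hd : Integrable (d x₀) ρ) {u : X → ℝ} (hu : AEStronglyMeasurable u ρ)
    (hud : ∀ x y, |u x - u y| ≤ d x y) : Integrable u ρ := by
  refine ((integrable_const |u x₀|).add hd).mono' hu (.of_forall fun x => ?_)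
  calc ‖u x‖ = |u x₀ - (u x₀ - u x)| := by simp
    _ ≤ |u x₀| + |u x₀ - u x| := abs_sub _ _
    _ ≤ |u x₀| + d x₀ x := by gcongr; exact hud x₀ x

variable [TopologicalSpace X]

lemma integrable_of_lintegral_ofReal_ne_top [MeasurableSpace X] [OpensMeasurableSpace X]
    (hd : LowerSemicontinuous fun p : X × X => d p.1 p.2) {ρ : Measure X} {x₀ : X}
    (h : ∫⁻ x, ENNReal.ofReal (d x₀ x) ∂ρ ≠ ∞) : Integrable (d x₀) ρ :=
  have hd₀ : LowerSemicontinuous (d x₀) := hd.comp (Continuous.prodMk_right x₀)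
  (lintegral_ofReal_ne_top_iff_integrable hd₀.measurable.aestronglyMeasurable
    (.of_forall fun x => d.nonneg x₀ x)).1 h

lemma exists_lowerSemicontinuous_lipschitz_between
    (hd : LowerSemicontinuous fun p : X × X => d p.1 p.2) {φ ψ : X → ℝ}
    (hψ : LowerSemicontinuous ψ) (h : ∀ x y, φ x - ψ y ≤ d x y) {K : Set X} (hK : IsCompact K)
    (hne : K.Nonempty) :
    ∃ u : X → ℝ, LowerSemicontinuous u ∧ (∀ x y, |u x - u y| ≤ d x y) ∧ (∀ x, φ x ≤ u x) ∧
      ∀ x, ∀ y ∈ K, u x ≤ ψ y + d x y := by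
  have : CompactSpace K := isCompact_iff_compactSpace.1 hK
  have : Nonempty K := hne.to_subtype
  have hφ_le (x : X) (y : K) : φ x ≤ ψ y + d x y := by linarith [h x y]
  have hbdd (x : X) : BddBelow (range fun y : K => ψ y + d x y) :=
    ⟨φ x, forall_mem_range.2 (hφ_le x)⟩
  let u : X → ℝ := infConv (fun x (y : K) => d x y) (fun y => ψ y)
  have hu_sub (x x' : X) : u x - u x' ≤ d x x' := by
    rw [sub_le_iff_le_add']
    exact infConv_le_infConv_add (hbdd x) fun y => (d.triangle x x' y).trans_eq (add_comm _ _)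
  refine ⟨u, lowerSemicontinuous_infConv ?_, fun x y => abs_sub_le_iff.2 ⟨hu_sub x y, ?_⟩,
    fun x => le_infConv (hφ_le x), fun x y hy => infConv_le (hbdd x) (⟨y, hy⟩ : K)⟩
  · exact (hψ.comp (by fun_prop : Continuous fun p : X × K => (p.2 : X))).add
      (hd.comp (by fun_prop : Continuous fun p : X × K => (p.1, (p.2 : X))))
  · exact (hu_sub y x).trans_eq (d.symm y x)

variable [PolishSpace X] [MeasurableSpace X] [BorelSpace X] {ν μ : Measure X} [IsFiniteMeasure ν]
  [IsFiniteMeasure μ] {x₀ : X}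

lemma exists_lipschitz_integral_sub_integral_le
    (hd : LowerSemicontinuous fun p : X × X => d p.1 p.2) (hν : Integrable (d x₀) ν)
    (hμ : Integrable (d x₀) μ) {φ ψ : X →ᵇ ℝ} (h : ∀ x y, φ x - ψ y ≤ d x y) {ε : ℝ}
    (hε : 0 < ε) :
    ∃ u : X → ℝ, (Measurable u ∧ ∀ x y, |u x - u y| ≤ d x y) ∧
      ∫ x, φ x ∂ν - ∫ x, ψ x ∂μ ≤ ∫ x, u x ∂ν - ∫ x, u x ∂μ + ε := by
  let b (x : X) : ℝ := 2 * ‖ψ‖ + d x₀ x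
  have hb_nonneg (x : X) : 0 ≤ b x := add_nonneg (by positivity) (d.nonneg x₀ x)
  have hb : Integrable b μ := (integrable_const _).add hμ
  obtain ⟨K, hx₀K, hK, hKε⟩ := exists_isCompact_superset_setLIntegral_compl_lt μ
    hb.lintegral_lt_top.ne (isCompact_singleton (x := x₀)) (ENNReal.ofReal_pos.2 hε)
  rw [singleton_subset_iff] at hx₀K
  have hK_meas : MeasurableSet Kᶜ := hK.measurableSet.compl
  have htail : ∫ x in Kᶜ, b x ∂μ ≤ ε := by
    rw [integral_eq_lintegral_of_nonneg_ae (.of_forall hb_nonneg) hb.1.restrict]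
    exact ENNReal.toReal_le_of_le_ofReal hε.le hKε.le
  obtain ⟨u, hu, hud, hφu, huψ⟩ := exists_lowerSemicontinuous_lipschitz_between hd
    ψ.continuous.lowerSemicontinuous h hK ⟨x₀, hx₀K⟩
  have hu_le (x : X) : u x ≤ ψ x + Kᶜ.indicator b x := by
    by_cases hx : x ∈ K
    · simpa [hx] using huψ x x hx
    · calc u x ≤ ψ x₀ + d x x₀ := huψ x x₀ hx₀K
        _ ≤ ψ x + 2 * ‖ψ‖ + d x₀ x := by
          rw [d.symm x x₀]
          linarith [neg_le_of_abs_le (ψ.norm_coe_le_norm x), le_of_abs_le (ψ.norm_coe_le_norm x₀)]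
        _ = ψ x + Kᶜ.indicator b x := by
          rw [indicator_of_mem (mem_compl hx), add_assoc]
  have hφ_le : ∫ x, φ x ∂ν ≤ ∫ x, u x ∂ν := integral_mono (φ.integrable ν)
    (integrable_of_forall_abs_sub_le hν hu.measurable.aestronglyMeasurable hud) hφu
  have hle_ψ : ∫ x, u x ∂μ ≤ ∫ x, ψ x ∂μ + ε := calc
    ∫ x, u x ∂μ ≤ ∫ x, (ψ x + Kᶜ.indicator b x) ∂μ := integral_mono
        (integrable_of_forall_abs_sub_le hμ hu.measurable.aestronglyMeasurable hud)
        ((ψ.integrable μ).add (hb.indicator hK_meas)) hu_le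
    _ = ∫ x, ψ x ∂μ + ∫ x in Kᶜ, b x ∂μ := by
      rw [integral_add (ψ.integrable μ) (hb.indicator hK_meas), integral_indicator hK_meas]
    _ ≤ ∫ x, ψ x ∂μ + ε := by gcongr
  exact ⟨u, ⟨hu.measurable, hud⟩, by linarith⟩

lemma optCost_le_ofReal (hd : LowerSemicontinuous fun p : X × X => d p.1 p.2)
    (hν : Integrable (d x₀) ν) (hμ : Integrable (d x₀) μ) {S : ℝ}
    (hS : ∀ u : X → ℝ, (Measurable u ∧ ∀ x y, |u x - u y| ≤ d x y) →
      ∫ x, u x ∂ν - ∫ x, u x ∂μ ≤ S) :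
    optCost d ν μ ≤ ENNReal.ofReal S := by
  obtain ⟨π, hπ, hπS⟩ := exists_isCoupling_lintegral_le (fun p => d.nonneg p.1 p.2) hd ν μ
    (S := S) fun φ ψ h => le_of_forall_pos_le_add fun ε hε => by
      obtain ⟨u, hu, hle⟩ := exists_lipschitz_integral_sub_integral_le hd hν hμ h hε
      linarith [hS u hu]
  exact (iInf₂_le π ⟨hπ.map_fst, hπ.map_snd⟩).trans hπS

end Pseudometric

theorem kantorovich_rubinstein_general {X : Type*} [TopologicalSpace X] [PolishSpace X]
    [MeasurableSpace X] [BorelSpace X] (d : PseudoMetric X ℝ)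
    (hd : LowerSemicontinuous fun p : X × X => d p.1 p.2) (ν μ : Measure X)
    [IsFiniteMeasure ν] [IsFiniteMeasure μ] (x₀ : X)
    (hν : ∫⁻ x, ENNReal.ofReal (d x₀ x) ∂ν ≠ ∞)
    (hμ : ∫⁻ x, ENNReal.ofReal (d x₀ x) ∂μ ≠ ∞) :
    optCost d ν μ =
      ⨆ (u : X → ℝ) (_ : Measurable u ∧ ∀ x y, |u x - u y| ≤ d x y),
        ENNReal.ofReal (∫ x, u x ∂ν - ∫ x, u x ∂μ) := by
  have hν_int := integrable_of_lintegral_ofReal_ne_top hd hν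
  have hμ_int := integrable_of_lintegral_ofReal_ne_top hd hμ
  refine le_antisymm (le_of_forall_ge fun S hS => ?_) (iSup₂_le fun u hu => le_iInf₂ fun π hπ => ?_)
  · rw [iSup₂_le_iff] at hS
    rcases eq_or_ne S ∞ with rfl | hS_top
    · exact le_top
    · rw [← ENNReal.ofReal_toReal hS_top]
      exact optCost_le_ofReal hd hν_int hμ_int fun u hu =>
        (ENNReal.ofReal_le_iff_le_toReal hS_top).1 (hS u hu)
  · obtain ⟨hu_meas, hud⟩ := hu
    have hπ : IsCoupling_s5 π ν μ := ⟨hπ.1, hπ.2⟩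
    exact hπ.ofReal_integral_sub_integral_le
      (integrable_of_forall_abs_sub_le hν_int hu_meas.aestronglyMeasurable hud)
      (integrable_of_forall_abs_sub_le hμ_int hu_meas.aestronglyMeasurable hud)
      fun x y => (le_abs_self _).trans (hud x y)

/-- Kantorovich–Rubinstein theorem: for a lower semicontinuous metric `d` on a Polish
space (possibly different from the Polish metric) and probability measures with finite
first `d`-moment, `𝒯_d(ν,μ)` equals the supremum of `∫ u dν − ∫ u dμ` over Borel
measurable `d`-Lipschitz(1) functions `u`. -/
theorem kantorovich_rubinstein {X : Type*} [TopologicalSpace X] [PolishSpace X]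
    [MeasurableSpace X] [BorelSpace X]
    (d : X → X → ℝ)
    (hd_self : ∀ x, d x x = 0) (hd_eq : ∀ x y, d x y = 0 → x = y)
    (hd_symm : ∀ x y, d x y = d y x) (hd_triangle : ∀ x y z, d x z ≤ d x y + d y z)
    (hd_lsc : LowerSemicontinuous fun p : X × X => d p.1 p.2)
    (ν μ : Measure X) [IsProbabilityMeasure ν] [IsProbabilityMeasure μ]
    (x₀ : X)
    (hν₁ : ∫⁻ x, ENNReal.ofReal (d x₀ x) ∂ν ≠ ∞)
    (hμ₁ : ∫⁻ x, ENNReal.ofReal (d x₀ x) ∂μ ≠ ∞) :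
    optCost d ν μ =
      ⨆ (u : X → ℝ) (_ : Measurable u ∧ ∀ x y, |u x - u y| ≤ d x y),
        ENNReal.ofReal (∫ x, u x ∂ν - ∫ x, u x ∂μ) :=
  kantorovich_rubinstein_general ⟨d, hd_self, hd_symm, hd_triangle⟩ hd_lsc ν μ x₀ hν₁ hμ₁
end
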